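/- arXiv:math/0604024 — 3 statements merged into one kernel-verified Lean document; each statement's English description precedes it below -/
import Mathlib

section
/- For all integers n ≥ 4 and l ≥ 1, the numbers of connected components of the spaces of very nice M-morsifications satisfy the recurrence #comp(V(n−2, l+1)) = #comp(V(n, l)) − n·l·#comp(V(n, l−1)), where #comp denotes the number of connected components (Nat.card of the type of connected components of the subspace). -/
open Polynomial

/-- `V n l ⊆ ℝ^{n-2} × ℝ^l` : the space of very nice M-morsifications of the
multiboundary singularity `B_n^l`.  A pair `(λ, b)` belongs to it iff the polynomial
`p(x) = x^n + λ₂ x^{n-2} + ⋯ + λ_{n-1} x` has `n-1` distinct real critical points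
(its derivative has `n-1` distinct real roots) and the `n-1` critical values together
with the `l` boundary values `p(b₁), …, p(b_l)` are pairwise distinct. -/
noncomputable def V (n l : ℕ) : Set ((Fin (n - 2) → ℝ) × (Fin l → ℝ)) :=
  {q | ∀ p : ℝ[X],
      p = X ^ n + ∑ j : Fin (n - 2), C (q.1 j) * X ^ (n - 2 - (j : ℕ)) →
      (p.derivative.roots.toFinset.card = n - 1 ∧
        (∀ x ∈ p.derivative.roots.toFinset, ∀ y ∈ p.derivative.roots.toFinset,
          x ≠ y → p.eval x ≠ p.eval y) ∧
        (∀ x ∈ p.derivative.roots.toFinset, ∀ i : Fin l, p.eval x ≠ p.eval (q.2 i)) ∧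
        (∀ i j : Fin l, i ≠ j → p.eval (q.2 i) ≠ p.eval (q.2 j)))}

/-!
A very nice morsification is determined, up to deformation within the space of such, by its
combinatorial type: the monotone branch of the polynomial on which each boundary point lies, and
the order of the critical and boundary values. The only constraints on a type are those that
monotonicity forces on each branch. Indeed, once the branches are fixed, the map from the critical
points, the boundary points and a constant term to the values and the sum of the critical points is
a proper local homeomorphism between open convex cones, hence a homeomorphism. So each type is
realized by a connected stratum; each stratum is closed in `V`, and the components are counted by
the types.

To count types, give a minimum the sign `-1`, a maximum `1` and a boundary point `0`. The jumps of
the sign between consecutive values telescope to `2` up to the contribution of boundary points at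
the extremes. Over all types, the consecutive pairs whose order is not forced contribute nothing
in total, because exchanging the pair gives another type. A forced consecutive pair is either a
minimum and a maximum bounding a common branch, where the jump is `2` and merging the pair into a
boundary point gives a type of `V (n - 2) (l + 1)`; or it shows that a boundary value is as low or
as high as its branch allows. Deleting that boundary point gives a type of `V n (l - 1)`, with any
of `n` branches and `l` labels, and both the low and the high case occur.
-/

section CoveringPairs

variable {α : Type*}

/-- `Covers r a b` says that `b` is the immediate successor of `a` for the strict order `r`.
It is the relation-level version of `a ⋖ b`, for types with many competing orders. -/
def Covers (r : α → α → Prop) (a b : α) : Prop :=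
  r a b ∧ ∀ c, r a c → ¬ r c b

variable {r : α → α → Prop} {a b c : α}

theorem covers_swap_iff : Covers (Function.swap r) a b ↔ Covers r b a :=
  and_congr_right fun _ => forall_congr' fun _ => ⟨fun h h₁ h₂ => h h₂ h₁, fun h h₁ h₂ => h h₂ h₁⟩

variable [IsStrictTotalOrder α r]

theorem Covers.right_unique (hb : Covers r a b) (hc : Covers r a c) : b = c := by
  rcases trichotomous_of r b c with h | h | h
  exacts [absurd h (hc.2 b hb.1), h, absurd h (hb.2 c hc.1)]

theorem Covers.left_unique (ha : Covers r a c) (hb : Covers r b c) : a = b :=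
  Covers.right_unique (r := Function.swap r) (covers_swap_iff.2 ha) (covers_swap_iff.2 hb)

theorem Covers.rel_left_iff (h : Covers r a b) (hca : c ≠ a) : r c a ↔ r c b :=
  ⟨fun hc => trans_of r hc h.1, fun hc => (trichotomous_of r c a).resolve_right
    fun hac => hac.elim hca fun hac => h.2 c hac hc⟩

theorem Covers.rel_right_iff (h : Covers r a b) (hcb : c ≠ b) : r a c ↔ r b c :=
  (Covers.rel_left_iff (r := Function.swap r) (covers_swap_iff.2 h) hcb).symm

theorem Covers.rel_swap_swap [DecidableEq α] (h : Covers r a b) {x y : α} (hxy : r x y)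
    (hne : ¬ (x = a ∧ y = b)) : r (Equiv.swap a b x) (Equiv.swap a b y) := by
  have hirr : x ≠ y := fun h => irrefl_of r y (h ▸ hxy)
  have hba : ¬ (x = b ∧ y = a) := fun hba => asymm_of r h.1 (hba.1 ▸ hba.2 ▸ hxy)
  by_cases hxa : x = a
  · subst hxa
    have hyb : y ≠ b := fun hyb => hne ⟨rfl, hyb⟩
    rwa [Equiv.swap_apply_left, Equiv.swap_apply_of_ne_of_ne hirr.symm hyb,
      ← h.rel_right_iff hyb]
  by_cases hxb : x = b
  · subst hxb
    have hya : y ≠ a := fun hya => hba ⟨rfl, hya⟩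
    rwa [Equiv.swap_apply_right, Equiv.swap_apply_of_ne_of_ne hya hirr.symm,
      h.rel_right_iff hirr.symm]
  rw [Equiv.swap_apply_of_ne_of_ne hxa hxb]
  by_cases hya : y = a
  · rwa [hya, Equiv.swap_apply_left, ← h.rel_left_iff hxa, ← hya]
  by_cases hyb : y = b
  · rwa [hyb, Equiv.swap_apply_right, h.rel_left_iff hxa, ← hyb]
  rwa [Equiv.swap_apply_of_ne_of_ne hya hyb]

theorem exists_covers_of_rel [Finite α] (h : r a b) : ∃ c, Covers r c b := by
  have wf := Finite.wellFounded_of_trans_of_irrefl (Function.swap r)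
  exact ⟨wf.min {c | r c b} ⟨a, h⟩, wf.min_mem {c | r c b} ⟨a, h⟩,
    fun c hc hcb => wf.not_lt_min {c | r c b} hcb hc⟩

theorem exists_rel_covers_of_rel [Finite α] (h : r a b) : ∃ c, Covers r a c :=
  (exists_covers_of_rel (r := Function.swap r) h).imp fun _ => covers_swap_iff.1

open scoped Classical in
theorem sum_ite_maximal [Fintype α] [Nonempty α] :
    ∑ a, (if ∀ b, ¬ r a b then (1 : ℤ) else 0) = 1 := by
  have wf := Finite.wellFounded_of_trans_of_irrefl (Function.swap r)
  obtain ⟨t, -, ht⟩ := wf.has_min Set.univ Set.univ_nonempty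
  have ht : ∀ b, ¬ r t b := fun b => ht b trivial
  rw [Finset.sum_eq_single t (fun a _ hat => if_neg fun ha => ?_) (by simp), if_pos ht]
  exact (trichotomous_of r a t).elim (ha t) fun h => h.elim hat (ht a)

open scoped Classical in
theorem sum_ite_covers_and [Fintype α] {P : α → Prop} (hP : ∀ a, P a → r a b) :
    ∑ a, (if Covers r a b ∧ P a then (1 : ℤ) else 0) =
      (if ∀ a, r a b → ∃ c, P c ∧ ¬ r c a then 1 else 0) - (if ∀ a, ¬ r a b then 1 else 0) := by
  by_cases hmin : ∀ a, ¬ r a b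
  · rw [Finset.sum_eq_zero fun a _ => if_neg fun h => hmin a h.1.1, if_pos hmin,
      if_pos fun a h => absurd h (hmin a), sub_self]
  obtain ⟨a, ha⟩ := not_forall_not.1 hmin
  obtain ⟨d, hd⟩ := exists_covers_of_rel ha
  have hcond : (∀ a, r a b → ∃ c, P c ∧ ¬ r c a) ↔ P d := by
    refine ⟨fun h => ?_, fun h a hab => ⟨d, h, fun hda => hd.2 a hda hab⟩⟩
    obtain ⟨c, hc, hcd⟩ := h d hd.1
    rcases trichotomous_of r c d with h | rfl | h
    exacts [absurd h hcd, hc, absurd (hP c hc) (hd.2 c h)]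
  rw [if_neg hmin, sub_zero, Finset.sum_eq_single d ?_ (by simp)]
  · simp only [hcond, hd, true_and]
  exact fun a _ had => if_neg fun h => had (h.1.left_unique hd)

open scoped Classical in
theorem sum_covers_sub [Fintype α] (f : α → ℤ) :
    ∑ p : α × α with Covers r p.1 p.2, (f p.2 - f p.1) =
      ∑ a with ∀ b, ¬ r a b, f a - ∑ a with ∀ b, ¬ r b a, f a := by
  have upper : ∑ p : α × α with Covers r p.1 p.2, f p.2 = ∑ a with ¬ ∀ b, ¬ r b a, f a := by
    refine Finset.sum_nbij Prod.snd (fun p hp => ?_) (fun p hp q hq h => ?_) (fun b hb => ?_)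
      fun _ _ => rfl
    · simp only [Finset.mem_filter_univ, not_forall_not] at hp ⊢
      exact ⟨_, hp.1⟩
    · simp only [Finset.coe_filter_univ, Set.mem_ofPred_eq] at hp hq
      exact Prod.ext (Covers.left_unique hp (h ▸ hq)) h
    · simp only [Finset.coe_filter_univ, Set.mem_ofPred_eq, not_forall_not] at hb
      obtain ⟨c, hc⟩ := exists_covers_of_rel hb.choose_spec
      exact ⟨(c, b), by simpa using hc, rfl⟩
  have lower : ∑ p : α × α with Covers r p.1 p.2, f p.1 = ∑ a with ¬ ∀ b, ¬ r a b, f a := by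
    refine Finset.sum_nbij Prod.fst (fun p hp => ?_) (fun p hp q hq h => ?_) (fun a ha => ?_)
      fun _ _ => rfl
    · simp only [Finset.mem_filter_univ, not_forall_not] at hp ⊢
      exact ⟨_, hp.1⟩
    · simp only [Finset.coe_filter_univ, Set.mem_ofPred_eq] at hp hq
      exact Prod.ext h (Covers.right_unique hp (h ▸ hq))
    · simp only [Finset.coe_filter_univ, Set.mem_ofPred_eq, not_forall_not] at ha
      obtain ⟨c, hc⟩ := exists_rel_covers_of_rel ha.choose_spec
      exact ⟨(a, c), by simpa using hc, rfl⟩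
  rw [Finset.sum_sub_distrib, upper, lower]
  have h₁ := Finset.sum_filter_add_sum_filter_not Finset.univ (fun a => ∀ b, ¬ r b a) f
  have h₂ := Finset.sum_filter_add_sum_filter_not Finset.univ (fun a => ∀ b, ¬ r a b) f
  linarith

end CoveringPairs

/-- The Morse sign of a marked point: `-1` at minima, `1` at maxima and `0` at boundary points.
The critical points `Sum.inl j` are numbered from right to left, so the even ones are the minima. -/
def morseSign {m l : ℕ} : Fin m ⊕ Fin l → ℤ
  | .inl j => if Even (j : ℕ) then -1 else 1
  | .inr _ => 0

/-- `Touches β k a` says that the marked point `a` lies on the closure of the `k`-th monotone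
branch, when the boundary points are distributed over the branches by `β`. Branches are numbered
from right to left, so that the `j`-th critical point separates the branches `j` and `j + 1`. -/
def Touches {m l : ℕ} (β : Fin l → Fin (m + 1)) (k : Fin (m + 1)) : Fin m ⊕ Fin l → Prop
  | .inl j => k = j.castSucc ∨ k = j.succ
  | .inr i => k = β i

/-- `Forced β a b` says that the value at `a` is smaller than the value at `b` for every polynomial
realizing `β`, because both points lie on a common monotone branch and one of them is an end of
it. -/
def Forced {m l : ℕ} (β : Fin l → Fin (m + 1)) (a b : Fin m ⊕ Fin l) : Prop :=
  (∃ k, Touches β k a ∧ Touches β k b) ∧ morseSign a < morseSign b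

/-- The combinatorial type of a very nice morsification with `m` critical points and `l` boundary
points: the branch of each boundary point, and the order of the critical and boundary values. -/
@[ext]
structure MorsificationType (m l : ℕ) where
  branch : Fin l → Fin (m + 1)
  lt : Fin m ⊕ Fin l → Fin m ⊕ Fin l → Prop
  isStrictTotalOrder : IsStrictTotalOrder (Fin m ⊕ Fin l) lt
  lt_of_forced : ∀ a b, Forced branch a b → lt a b

namespace MorsificationType

attribute [instance] isStrictTotalOrder

variable {m l : ℕ}

instance : Finite (MorsificationType m l) :=
  Finite.of_injective (fun τ => (τ.branch, τ.lt)) fun _ _ h =>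
    MorsificationType.ext (congrArg Prod.fst h) (congrArg Prod.snd h)

noncomputable instance : Fintype (MorsificationType m l) :=
  Fintype.ofFinite _

theorem not_forced_of_lt (τ : MorsificationType m l) {a b : Fin m ⊕ Fin l} (h : τ.lt a b) :
    ¬ Forced τ.branch b a :=
  fun hf => asymm_of τ.lt h (τ.lt_of_forced b a hf)

/-- A free pair: two marked points with consecutive values whose order is not forced. -/
def IsFreePair (τ : MorsificationType m l) (p : (Fin m ⊕ Fin l) × (Fin m ⊕ Fin l)) : Prop :=
  Covers τ.lt p.1 p.2 ∧ ¬ Forced τ.branch p.1 p.2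

/-- The type obtained by exchanging the two consecutive values of a free pair. -/
def exchange (τ : MorsificationType m l) (p : (Fin m ⊕ Fin l) × (Fin m ⊕ Fin l))
    (hp : τ.IsFreePair p) : MorsificationType m l where
  branch := τ.branch
  lt := Equiv.swap p.1 p.2 ⁻¹'o τ.lt
  isStrictTotalOrder :=
    (RelIso.preimage (Equiv.swap p.1 p.2) τ.lt).toRelEmbedding.isStrictTotalOrder
  lt_of_forced x y hxy := by
    refine hp.1.rel_swap_swap (τ.lt_of_forced x y hxy) ?_
    rintro ⟨rfl, rfl⟩
    exact hp.2 hxy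

theorem exchange_isFreePair (τ : MorsificationType m l) (p : (Fin m ⊕ Fin l) × (Fin m ⊕ Fin l))
    (hp : τ.IsFreePair p) : (τ.exchange p hp).IsFreePair p.swap := by
  refine ⟨⟨?_, fun c h₁ h₂ => ?_⟩, τ.not_forced_of_lt hp.1.1⟩
  · simpa [exchange, Order.Preimage] using hp.1.1
  · simp only [exchange, Order.Preimage, Prod.fst_swap, Prod.snd_swap, Equiv.swap_apply_left,
      Equiv.swap_apply_right] at h₁ h₂
    exact hp.1.2 _ h₁ h₂

theorem exchange_exchange (τ : MorsificationType m l) (p : (Fin m ⊕ Fin l) × (Fin m ⊕ Fin l))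
    (hp : τ.IsFreePair p) :
    (τ.exchange p hp).exchange p.swap (τ.exchange_isFreePair p hp) = τ := by
  refine MorsificationType.ext rfl ?_
  funext x y
  simp [exchange, Order.Preimage, Equiv.swap_comm p.2 p.1]

open scoped Classical in
theorem sum_free_pairs :
    ∑ τ : MorsificationType m l, ∑ p with τ.IsFreePair p, (morseSign p.2 - morseSign p.1) = 0 := by
  rw [Finset.sum_sigma']
  refine Finset.sum_involution
    (fun q hq => ⟨q.1.exchange q.2 (by simpa using hq), q.2.swap⟩) (fun q _ => ?_)
    (fun q _ hq h => hq ?_) (fun q hq => ?_) (fun q hq => ?_)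
  · simp
  · have hfst : q.2.2 = q.2.1 := congrArg (fun q => q.2.1) h
    rw [hfst, sub_self]
  · simpa using exchange_isFreePair q.1 q.2 (by simpa using hq)
  · simp only [exchange_exchange, Prod.swap_swap]

end MorsificationType

/-- The minimum among the consecutive critical points `p` and `p + 1`. -/
def pairMin {m : ℕ} (p : Fin (m + 1)) : Fin (m + 2) :=
  if Even (p : ℕ) then p.castSucc else p.succ

/-- The maximum among the consecutive critical points `p` and `p + 1`. -/
def pairMax {m : ℕ} (p : Fin (m + 1)) : Fin (m + 2) :=
  if Even (p : ℕ) then p.succ else p.castSucc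

theorem pair_injective {m : ℕ} :
    Function.Injective fun p : Fin (m + 1) => (pairMin p, pairMax p) := by
  intro p q h
  simp only [pairMin, pairMax, Prod.mk.injEq] at h
  split_ifs at h <;> simp only [Fin.ext_iff, Fin.val_castSucc, Fin.val_succ] at h ⊢ <;> omega

theorem forced_inl_inl_iff {m l : ℕ} {β : Fin l → Fin (m + 2 + 1)} {j j' : Fin (m + 2)} :
    Forced β (.inl j) (.inl j') ↔ ∃ p, j = pairMin p ∧ j' = pairMax p := by
  constructor
  · rintro ⟨⟨k, hk, hk'⟩, hs⟩
    simp only [Touches, morseSign, Fin.ext_iff, Fin.val_castSucc, Fin.val_succ] at hk hk' hs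
    have := j.2
    have := j'.2
    refine ⟨⟨min j j', by split_ifs at hs <;> grind⟩, ?_, ?_⟩ <;>
    simp only [pairMin, pairMax] <;> grind
  · rintro ⟨p, rfl, rfl⟩
    refine ⟨⟨p.castSucc.succ, ?_⟩, ?_⟩ <;>
    simp only [Touches, morseSign, pairMin, pairMax, Fin.ext_iff] <;> grind

theorem exists_forced_or_forced {m l : ℕ} (β : Fin l → Fin (m + 2 + 1)) (j : Fin (m + 2)) :
    ∃ j', Forced β (.inl j) (.inl j') ∨ Forced β (.inl j') (.inl j) := by
  obtain ⟨p, hp⟩ : ∃ p : Fin (m + 1), j = p.castSucc ∨ j = p.succ := by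
    induction j using Fin.cases with
    | zero => exact ⟨0, .inl rfl⟩
    | succ p => exact ⟨p, .inr rfl⟩
  have hp : j = pairMin p ∨ j = pairMax p := by
    simp only [pairMin, pairMax]
    grind
  rcases hp with rfl | rfl
  exacts [⟨_, .inl (forced_inl_inl_iff.2 ⟨p, rfl, rfl⟩)⟩,
    ⟨_, .inr (forced_inl_inl_iff.2 ⟨p, rfl, rfl⟩)⟩]

namespace MorsificationType

variable {m l : ℕ}

/-- The critical values of the consecutive critical points `p` and `p + 1` are neighbours among all
critical and boundary values. -/
def IsCollapsible (τ : MorsificationType (m + 2) l) (p : Fin (m + 1)) : Prop :=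
  Covers τ.lt (.inl (pairMin p)) (.inl (pairMax p))

/-- The `i`-th boundary value is as low as its branch allows: it is the smallest of all values, or
it immediately follows the value at the minimum bounding the branch. -/
def AtBottom (τ : MorsificationType m l) (i : Fin l) : Prop :=
  ∀ a, τ.lt a (.inr i) → ∃ c, Forced τ.branch c (.inr i) ∧ ¬ τ.lt c a

/-- The `i`-th boundary value is as high as its branch allows: it is the largest of all values, or
it immediately precedes the value at the maximum bounding the branch. -/
def AtTop (τ : MorsificationType m l) (i : Fin l) : Prop :=
  ∀ a, τ.lt (.inr i) a → ∃ c, Forced τ.branch (.inr i) c ∧ ¬ τ.lt a c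

theorem morseSign_sub_inl_inl {β : Fin l → Fin (m + 1)} {j j' : Fin m}
    (h : Forced β (.inl j) (.inl j')) :
    morseSign (.inl j' : Fin m ⊕ Fin l) - morseSign (.inl j : Fin m ⊕ Fin l) = 2 := by
  have := h.2
  simp only [morseSign] at this ⊢
  grind

theorem morseSign_eq_of_forced_inr {β : Fin l → Fin (m + 1)} {a : Fin m ⊕ Fin l} {i : Fin l}
    (h : Forced β a (.inr i)) : morseSign a = -1 := by
  have := h.2
  cases a <;> simp only [morseSign] at this ⊢ <;> grind

theorem morseSign_eq_of_inr_forced {β : Fin l → Fin (m + 1)} {a : Fin m ⊕ Fin l} {i : Fin l}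
    (h : Forced β (.inr i) a) : morseSign a = 1 := by
  have := h.2
  cases a <;> simp only [morseSign] at this ⊢ <;> grind

open scoped Classical in
theorem sum_forced_covers_inr (τ : MorsificationType m l) (i : Fin l) :
    ∑ a, (if Covers τ.lt a (.inr i) ∧ Forced τ.branch a (.inr i) then
        morseSign (.inr i : Fin m ⊕ Fin l) - morseSign a else 0) =
      (if τ.AtBottom i then 1 else 0) - (if ∀ a, ¬ τ.lt a (.inr i) then 1 else 0) := by
  convert sum_ite_covers_and (r := τ.lt) fun a => τ.lt_of_forced a (.inr i) using 2
  · refine ite_congr rfl (fun h => ?_) fun _ => rfl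
    rw [morseSign_eq_of_forced_inr h.2]
    rfl
  · congr

open scoped Classical in
theorem sum_inr_forced_covers (τ : MorsificationType m l) (i : Fin l) :
    ∑ a, (if Covers τ.lt (.inr i) a ∧ Forced τ.branch (.inr i) a then
        morseSign a - morseSign (.inr i : Fin m ⊕ Fin l) else 0) =
      (if τ.AtTop i then 1 else 0) - (if ∀ a, ¬ τ.lt (.inr i) a then 1 else 0) := by
  convert sum_ite_covers_and (r := Function.swap τ.lt) fun a => τ.lt_of_forced (.inr i) a using 2
  · rw [covers_swap_iff]
    refine ite_congr rfl (fun h => ?_) fun _ => rfl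
    rw [morseSign_eq_of_inr_forced h.2]
    rfl
  · congr

open scoped Classical in
theorem sum_forced_covers_inl (τ : MorsificationType (m + 2) l) :
    ∑ j, ∑ j', (if Covers τ.lt (.inl j) (.inl j') ∧ Forced τ.branch (.inl j) (.inl j') then
        morseSign (.inl j' : Fin (m + 2) ⊕ Fin l) -
          morseSign (.inl j : Fin (m + 2) ⊕ Fin l) else 0) =
      2 * ∑ p, (if τ.IsCollapsible p then (1 : ℤ) else 0) := by
  rw [← Fintype.sum_prod_type', Finset.mul_sum]
  refine (Finset.sum_of_injOn _ pair_injective.injOn (by simp) (fun q _ hq => if_neg ?_)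
    fun p _ => ?_).symm
  · rintro ⟨-, hf⟩
    obtain ⟨p, h₁, h₂⟩ := forced_inl_inl_iff.1 hf
    exact hq ⟨p, by simp, Prod.ext h₁.symm h₂.symm⟩
  · have hf : Forced τ.branch (.inl (pairMin p)) (.inl (pairMax p)) :=
      forced_inl_inl_iff.2 ⟨p, rfl, rfl⟩
    rw [morseSign_sub_inl_inl hf, mul_ite, mul_one, mul_zero]
    exact ite_congr (propext (and_iff_left hf)).symm (fun _ => rfl) fun _ => rfl

open scoped Classical in
theorem sum_morseSign_maximal (τ : MorsificationType (m + 2) l) :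
    ∑ a with ∀ b, ¬ τ.lt a b, morseSign a =
      1 - ∑ i, (if ∀ b, ¬ τ.lt (.inr i) b then 1 else 0) := by
  have hsum := sum_ite_maximal (r := τ.lt)
  rw [Fintype.sum_sum_type] at hsum
  rw [Finset.sum_filter, Fintype.sum_sum_type, eq_sub_iff_add_eq]
  refine .trans (congrArg (· + _) ?_) hsum
  simp only [morseSign, ite_self, Finset.sum_const_zero, add_zero]
  refine Finset.sum_congr rfl fun j _ =>
    ite_congr rfl (fun hj => if_neg fun heven => ?_) fun _ => rfl
  obtain ⟨j', h | h⟩ := exists_forced_or_forced τ.branch j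
  · exact hj _ (τ.lt_of_forced _ _ h)
  · have := h.2
    simp only [morseSign] at this
    grind

open scoped Classical in
theorem sum_morseSign_minimal (τ : MorsificationType (m + 2) l) :
    ∑ a with ∀ b, ¬ τ.lt b a, morseSign a =
      ∑ i, (if ∀ b, ¬ τ.lt b (.inr i) then 1 else 0) - 1 := by
  have hsum := sum_ite_maximal (r := Function.swap τ.lt)
  rw [Fintype.sum_sum_type] at hsum
  have critical : ∑ j, (if ∀ b, ¬ τ.lt b (.inl j) then
      morseSign (.inl j : Fin (m + 2) ⊕ Fin l) else 0) =
        -∑ j, (if ∀ b, ¬ τ.lt b (.inl j) then 1 else 0) := by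
    rw [← Finset.sum_neg_distrib]
    refine Finset.sum_congr rfl fun j _ => ?_
    rw [apply_ite Neg.neg, neg_zero]
    refine ite_congr rfl (fun hj => if_pos ?_) fun _ => rfl
    obtain ⟨j', h | h⟩ := exists_forced_or_forced τ.branch j
    · have := h.2
      simp only [morseSign] at this
      grind
    · exact absurd (τ.lt_of_forced _ _ h) (hj _)
  have boundary : ∑ i, (if ∀ b, ¬ τ.lt b (.inr i) then
      morseSign (.inr i : Fin (m + 2) ⊕ Fin l) else 0) = 0 := by
    simp [morseSign]
  rw [Finset.sum_filter, Fintype.sum_sum_type, critical, boundary]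
  simp only [Function.swap] at hsum
  linarith

open scoped Classical in
theorem sum_forced_covers (τ : MorsificationType (m + 2) l) :
    ∑ p : (Fin (m + 2) ⊕ Fin l) × (Fin (m + 2) ⊕ Fin l) with
        Covers τ.lt p.1 p.2 ∧ Forced τ.branch p.1 p.2, (morseSign p.2 - morseSign p.1) =
      2 * ∑ p, (if τ.IsCollapsible p then (1 : ℤ) else 0) +
      ∑ i, ((if τ.AtBottom i then 1 else 0) + (if τ.AtTop i then 1 else 0)) -
      ∑ i, ((if ∀ a, ¬ τ.lt a (.inr i) then 1 else 0) +
        (if ∀ a, ¬ τ.lt (.inr i) a then 1 else 0)) := by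
  have bottom := Fintype.sum_congr _ _ τ.sum_forced_covers_inr
  have top := Fintype.sum_congr _ _ τ.sum_inr_forced_covers
  rw [Finset.sum_filter, Fintype.sum_prod_type, Fintype.sum_sum_type]
  simp only [Fintype.sum_sum_type, Finset.sum_add_distrib, Finset.sum_sub_distrib] at bottom top ⊢
  rw [Finset.sum_comm] at bottom
  have inr_inr : ∑ i, ∑ i', (if Covers τ.lt (.inr i) (.inr i') ∧ Forced τ.branch (.inr i) (.inr i')
      then morseSign (.inr i' : Fin (m + 2) ⊕ Fin l) -
        morseSign (.inr i : Fin (m + 2) ⊕ Fin l) else 0) = 0 := by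
    simp [morseSign]
  have := τ.sum_forced_covers_inl
  rw [Finset.sum_comm (γ := Fin l)] at inr_inr
  linarith

open scoped Classical in
theorem sum_covers_split (τ : MorsificationType (m + 2) l) :
    2 = 2 * ∑ p, (if τ.IsCollapsible p then (1 : ℤ) else 0) +
      ∑ i, ((if τ.AtBottom i then 1 else 0) + (if τ.AtTop i then 1 else 0)) +
      ∑ p with τ.IsFreePair p, (morseSign p.2 - morseSign p.1) := by
  have total := sum_covers_sub (r := τ.lt) morseSign
  rw [sum_morseSign_maximal, sum_morseSign_minimal,
    ← Finset.sum_filter_add_sum_filter_not _ fun p => Forced τ.branch p.1 p.2,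
    Finset.filter_filter, Finset.filter_filter, sum_forced_covers] at total
  have free : ∑ p with τ.IsFreePair p, (morseSign p.2 - morseSign p.1) =
      ∑ p : (Fin (m + 2) ⊕ Fin l) × (Fin (m + 2) ⊕ Fin l) with
        Covers τ.lt p.1 p.2 ∧ ¬ Forced τ.branch p.1 p.2, (morseSign p.2 - morseSign p.1) :=
    Finset.sum_congr (Finset.filter_congr fun _ _ => Iff.rfl) fun _ _ => rfl
  simp only [Finset.sum_add_distrib] at total ⊢
  linarith

end MorsificationType

section InsertRel

variable {α : Type*}

/-- The extension of the strict order `r` by a new element `none` lying above the elements of `D`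
and below all others. -/
def InsertRel (r : α → α → Prop) (D : Set α) : Option α → Option α → Prop
  | some a, some b => r a b
  | some a, none => a ∈ D
  | none, some b => b ∉ D
  | none, none => False

theorem insertRel_isStrictTotalOrder {r : α → α → Prop} [IsStrictTotalOrder α r] {D : Set α}
    (hD : ∀ a b, r a b → b ∈ D → a ∈ D) : IsStrictTotalOrder (Option α) (InsertRel r D) where
  trichotomous a b := by
    cases a <;> cases b <;> simp only [InsertRel, Option.some.injEq, reduceCtorEq] <;>
      first | tauto | exact fun h₁ h₂ => ((trichotomous_of r _ _).resolve_left h₁).resolve_right h₂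
  irrefl a := by
    cases a
    exacts [id, irrefl_of r _]
  trans a b c := by
    have lt_of_mem : ∀ a b, a ∈ D → b ∉ D → r a b := fun a b ha hb =>
      (trichotomous_of r a b).resolve_right <| by
        rintro (rfl | h)
        exacts [hb ha, hb (hD b a h ha)]
    cases a <;> cases b <;> cases c <;> simp only [InsertRel] <;>
      grind [trans_of r]

end InsertRel

section Skip

variable {m l : ℕ}

/-- The renumbering of the marked points when a new `i`-th boundary point is added. -/
def skip (i : Fin (l + 1)) : Fin m ⊕ Fin l → Fin m ⊕ Fin (l + 1) :=
  Sum.map id i.succAbove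

/-- The partial inverse of `skip i`, sending the `i`-th boundary point to `none`. -/
def unskip (i : Fin (l + 1)) : Fin m ⊕ Fin (l + 1) → Option (Fin m ⊕ Fin l)
  | .inl j => some (.inl j)
  | .inr i' => (finSuccEquiv' i i').map .inr

theorem skip_injective (i : Fin (l + 1)) : Function.Injective (skip i : Fin m ⊕ Fin l → _) :=
  Sum.map_injective.2 ⟨Function.injective_id, Fin.succAbove_right_injective⟩

theorem skip_ne (i : Fin (l + 1)) (a : Fin m ⊕ Fin l) : skip i a ≠ .inr i := by
  cases a <;> simp [skip, Fin.succAbove_ne]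

theorem eq_inr_or_exists_skip_eq (i : Fin (l + 1)) (a : Fin m ⊕ Fin (l + 1)) :
    a = .inr i ∨ ∃ b, skip i b = a := by
  rcases a with j | i'
  · exact .inr ⟨.inl j, rfl⟩
  · rcases Fin.eq_self_or_eq_succAbove i i' with rfl | ⟨j, rfl⟩
    exacts [.inl rfl, .inr ⟨.inr j, rfl⟩]

theorem unskip_skip (i : Fin (l + 1)) (a : Fin m ⊕ Fin l) : unskip i (skip i a) = some a := by
  cases a <;> simp [skip, unskip]

theorem unskip_inr (i : Fin (l + 1)) : unskip i (.inr i : Fin m ⊕ Fin (l + 1)) = none := by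
  simp [unskip]

theorem unskip_injective (i : Fin (l + 1)) :
    Function.Injective (unskip i : Fin m ⊕ Fin (l + 1) → _) := by
  intro a b h
  rcases eq_inr_or_exists_skip_eq i a with rfl | ⟨a, rfl⟩ <;>
  rcases eq_inr_or_exists_skip_eq i b with rfl | ⟨b, rfl⟩ <;>
  simp_all [unskip_skip, unskip_inr]

theorem morseSign_skip (i : Fin (l + 1)) (a : Fin m ⊕ Fin l) :
    morseSign (skip i a) = morseSign a := by
  cases a <;> rfl

theorem touches_skip (i : Fin (l + 1)) (β : Fin (l + 1) → Fin (m + 1)) (k : Fin (m + 1))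
    (a : Fin m ⊕ Fin l) : Touches β k (skip i a) ↔ Touches (i.removeNth β) k a := by
  cases a <;> rfl

theorem forced_skip (i : Fin (l + 1)) (β : Fin (l + 1) → Fin (m + 1)) (a b : Fin m ⊕ Fin l) :
    Forced β (skip i a) (skip i b) ↔ Forced (i.removeNth β) a b := by
  simp only [Forced, touches_skip, morseSign_skip]

theorem forced_inr_iff (β : Fin l → Fin (m + 1)) (a : Fin m ⊕ Fin l) (i : Fin l) :
    Forced β a (.inr i) ↔ Touches β (β i) a ∧ morseSign a < 0 := by
  simp [Forced, Touches, morseSign]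

theorem inr_forced_iff (β : Fin l → Fin (m + 1)) (a : Fin m ⊕ Fin l) (i : Fin l) :
    Forced β (.inr i) a ↔ Touches β (β i) a ∧ 0 < morseSign a := by
  simp [Forced, Touches, morseSign]

end Skip

namespace MorsificationType

variable {m l : ℕ}

/-- The type obtained by forgetting the `i`-th boundary point. -/
def delete (i : Fin (l + 1)) (τ : MorsificationType m (l + 1)) : MorsificationType m l where
  branch := i.removeNth τ.branch
  lt := skip i ⁻¹'o τ.lt
  isStrictTotalOrder :=
    (RelEmbedding.preimage ⟨skip i, skip_injective i⟩ τ.lt).isStrictTotalOrder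
  lt_of_forced a b h := τ.lt_of_forced _ _ ((forced_skip i τ.branch a b).2 h)

theorem ext_of_delete {i : Fin (l + 1)} {τ τ' : MorsificationType m (l + 1)}
    (hbranch : τ.branch i = τ'.branch i) (hdelete : τ.delete i = τ'.delete i)
    (hlt : ∀ a, τ.lt (skip i a) (.inr i) ↔ τ'.lt (skip i a) (.inr i)) : τ = τ' := by
  refine MorsificationType.ext ?_ ?_
  · rw [← Fin.insertNth_self_removeNth i τ.branch, ← Fin.insertNth_self_removeNth i τ'.branch,
      hbranch]
    exact congrArg (fun σ : MorsificationType m l =>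
      Fin.insertNth (α := fun _ => Fin (m + 1)) i _ σ.branch) hdelete
  · have hlt' : ∀ a, τ.lt (.inr i) (skip i a) ↔ τ'.lt (.inr i) (skip i a) := fun a => by
      have h₁ := trichotomous_of τ.lt (skip i a) (.inr i)
      have h₂ := trichotomous_of τ'.lt (skip i a) (.inr i)
      have h₃ := asymm_of τ.lt (a := skip i a) (b := .inr i)
      have h₄ := asymm_of τ'.lt (a := skip i a) (b := .inr i)
      have := hlt a
      have := skip_ne i a
      tauto
    funext a b
    rcases eq_inr_or_exists_skip_eq i a with rfl | ⟨a, rfl⟩ <;>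
    rcases eq_inr_or_exists_skip_eq i b with rfl | ⟨b, rfl⟩
    · simp [irrefl_of τ.lt, irrefl_of τ'.lt]
    · exact propext (hlt' b)
    · exact propext (hlt a)
    · exact congrFun₂ (congrArg lt hdelete) a b

/-- A cut of `σ` along the branch `k`: a set `D` of marked points such that a new boundary point on
the branch `k` may take a value above those of `D` and below all others. -/
structure IsCut (σ : MorsificationType m l) (k : Fin (m + 1)) (D : Set (Fin m ⊕ Fin l)) : Prop where
  mem_of_lt : ∀ a b, σ.lt a b → b ∈ D → a ∈ D
  mem_of_touches : ∀ a, Touches σ.branch k a → morseSign a < 0 → a ∈ D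
  notMem_of_touches : ∀ a, Touches σ.branch k a → 0 < morseSign a → a ∉ D

theorem IsCut.exists_delete_eq {σ : MorsificationType m l} {k : Fin (m + 1)}
    {D : Set (Fin m ⊕ Fin l)} (hD : σ.IsCut k D) (i : Fin (l + 1)) :
    ∃ τ : MorsificationType m (l + 1), τ.branch i = k ∧ τ.delete i = σ ∧
      ∀ a, τ.lt (skip i a) (.inr i) ↔ a ∈ D := by
  have : IsStrictTotalOrder _ (InsertRel σ.lt D) := insertRel_isStrictTotalOrder hD.mem_of_lt
  let τ : MorsificationType m (l + 1) :=
    { branch := i.insertNth (α := fun _ => Fin (m + 1)) k σ.branch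
      lt := unskip i ⁻¹'o InsertRel σ.lt D
      isStrictTotalOrder :=
        (RelEmbedding.preimage ⟨unskip i, unskip_injective i⟩ _).isStrictTotalOrder
      lt_of_forced := fun a b h => by
        simp only [Order.Preimage]
        rcases eq_inr_or_exists_skip_eq i a with rfl | ⟨a, rfl⟩ <;>
        rcases eq_inr_or_exists_skip_eq i b with rfl | ⟨b, rfl⟩
        · exact absurd h.2 (lt_irrefl _)
        · rw [inr_forced_iff, touches_skip, morseSign_skip, Fin.insertNth_apply_same,
            Fin.removeNth_insertNth] at h
          simpa only [unskip_inr, unskip_skip, InsertRel] using hD.notMem_of_touches b h.1 h.2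
        · rw [forced_inr_iff, touches_skip, morseSign_skip, Fin.insertNth_apply_same,
            Fin.removeNth_insertNth] at h
          simpa only [unskip_inr, unskip_skip, InsertRel] using hD.mem_of_touches a h.1 h.2
        · rw [forced_skip, Fin.removeNth_insertNth] at h
          simpa only [unskip_skip, InsertRel] using σ.lt_of_forced a b h }
  refine ⟨τ, Fin.insertNth_apply_same (α := fun _ => Fin (m + 1)) i k σ.branch,
    MorsificationType.ext (Fin.removeNth_insertNth (α := fun _ => Fin (m + 1)) i k σ.branch) ?_,
    fun a => ?_⟩
  · funext a b
    simp only [τ, delete, Order.Preimage, unskip_skip, InsertRel]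
  · simp only [τ, Order.Preimage, unskip_skip, unskip_inr, InsertRel]

theorem card_of_isCut {D : Fin (m + 1) → MorsificationType m l → Set (Fin m ⊕ Fin l)}
    (hD : ∀ k σ, IsCut σ k (D k σ)) (i : Fin (l + 1)) :
    Nat.card {τ : MorsificationType m (l + 1) //
      ∀ a, τ.lt (skip i a) (.inr i) ↔ a ∈ D (τ.branch i) (τ.delete i)} =
      (m + 1) * Nat.card (MorsificationType m l) := by
  rw [← Nat.card_fin (m + 1), ← Nat.card_prod]
  refine Nat.card_eq_of_bijective (fun τ => (τ.1.branch i, τ.1.delete i)) ⟨?_, ?_⟩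
  · rintro ⟨τ, h⟩ ⟨τ', h'⟩ heq
    obtain ⟨hbranch, hdelete⟩ := Prod.ext_iff.1 heq
    exact Subtype.ext <| ext_of_delete hbranch hdelete fun a => by
      rw [h, h', show τ.branch i = τ'.branch i from hbranch,
        show τ.delete i = τ'.delete i from hdelete]
  · rintro ⟨k, σ⟩
    obtain ⟨τ, rfl, rfl, h⟩ := (hD k σ).exists_delete_eq i
    exact ⟨⟨τ, h⟩, rfl⟩

/-- The smallest cut of `σ` along the branch `k`. -/
def lowerCut (k : Fin (m + 1)) (σ : MorsificationType m l) : Set (Fin m ⊕ Fin l) :=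
  {a | ∃ c, (Touches σ.branch k c ∧ morseSign c < 0) ∧ ¬ σ.lt c a}

/-- The largest cut of `σ` along the branch `k`. -/
def upperCut (k : Fin (m + 1)) (σ : MorsificationType m l) : Set (Fin m ⊕ Fin l) :=
  {a | ∀ c, Touches σ.branch k c ∧ 0 < morseSign c → σ.lt a c}

theorem isCut_lowerCut (k : Fin (m + 1)) (σ : MorsificationType m l) :
    σ.IsCut k (lowerCut k σ) where
  mem_of_lt := fun _ _ hab ⟨c, hc, hcb⟩ => ⟨c, hc, fun hca => hcb (trans_of σ.lt hca hab)⟩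
  mem_of_touches a ha hs := ⟨a, ⟨ha, hs⟩, irrefl_of σ.lt a⟩
  notMem_of_touches := fun a ha hs ⟨c, hc, hca⟩ =>
    hca (σ.lt_of_forced c a ⟨⟨k, hc.1, ha⟩, hc.2.trans hs⟩)

theorem isCut_upperCut (k : Fin (m + 1)) (σ : MorsificationType m l) :
    σ.IsCut k (upperCut k σ) where
  mem_of_lt _ _ hab hb c hc := trans_of σ.lt hab (hb c hc)
  mem_of_touches a ha hs c hc := σ.lt_of_forced a c ⟨⟨k, ha, hc.1⟩, hs.trans hc.2⟩
  notMem_of_touches a ha hs h := irrefl_of σ.lt a (h a ⟨ha, hs⟩)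

theorem atBottom_iff (τ : MorsificationType m (l + 1)) (i : Fin (l + 1)) :
    τ.AtBottom i ↔
      ∀ a, τ.lt (skip i a) (.inr i) ↔ a ∈ lowerCut (τ.branch i) (τ.delete i) := by
  have forced_iff : ∀ c, Forced τ.branch (skip i c) (.inr i) ↔
      Touches (τ.delete i).branch (τ.branch i) c ∧ morseSign c < 0 := fun c => by
    rw [forced_inr_iff, touches_skip, morseSign_skip]
    rfl
  constructor
  · refine fun h a => ⟨fun ha => ?_, ?_⟩
    · obtain ⟨c, hc, hca⟩ := h _ ha
      rcases eq_inr_or_exists_skip_eq i c with rfl | ⟨c, rfl⟩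
      exacts [absurd hc.2 (lt_irrefl _), ⟨c, (forced_iff c).1 hc, hca⟩]
    · rintro ⟨c, hc, hca⟩
      have hci := τ.lt_of_forced _ _ ((forced_iff c).2 hc)
      rcases trichotomous_of τ.lt (skip i c) (skip i a) with h | h | h
      exacts [absurd h hca, h ▸ hci, trans_of τ.lt h hci]
  · intro h a ha
    rcases eq_inr_or_exists_skip_eq i a with rfl | ⟨a, rfl⟩
    · exact absurd ha (irrefl_of τ.lt _)
    · obtain ⟨c, hc, hca⟩ := (h a).1 ha
      exact ⟨skip i c, (forced_iff c).2 hc, hca⟩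

theorem atTop_iff (τ : MorsificationType m (l + 1)) (i : Fin (l + 1)) :
    τ.AtTop i ↔
      ∀ a, τ.lt (skip i a) (.inr i) ↔ a ∈ upperCut (τ.branch i) (τ.delete i) := by
  have forced_iff : ∀ c, Forced τ.branch (.inr i) (skip i c) ↔
      Touches (τ.delete i).branch (τ.branch i) c ∧ 0 < morseSign c := fun c => by
    rw [inr_forced_iff, touches_skip, morseSign_skip]
    rfl
  constructor
  · refine fun h a => ⟨fun ha c hc => ?_, fun ha => ?_⟩
    · exact trans_of τ.lt ha (τ.lt_of_forced _ _ ((forced_iff c).2 hc))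
    · by_contra hai
      obtain ⟨c, hc, hac⟩ := h (skip i a)
        (((trichotomous_of τ.lt _ _).resolve_left hai).resolve_left (skip_ne i a))
      rcases eq_inr_or_exists_skip_eq i c with rfl | ⟨c, rfl⟩
      exacts [lt_irrefl _ hc.2, hac (ha c ((forced_iff c).1 hc))]
  · intro h a ha
    rcases eq_inr_or_exists_skip_eq i a with rfl | ⟨a, rfl⟩
    · exact absurd ha (irrefl_of τ.lt _)
    · by_contra! hc
      exact asymm_of τ.lt ha ((h a).2 fun c hc' => hc _ ((forced_iff c).2 hc'))

theorem card_atBottom (i : Fin (l + 1)) :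
    Nat.card {τ : MorsificationType m (l + 1) // τ.AtBottom i} =
      (m + 1) * Nat.card (MorsificationType m l) := by
  simp only [atBottom_iff]
  exact card_of_isCut isCut_lowerCut i

theorem card_atTop (i : Fin (l + 1)) :
    Nat.card {τ : MorsificationType m (l + 1) // τ.AtTop i} =
      (m + 1) * Nat.card (MorsificationType m l) := by
  simp only [atTop_iff]
  exact card_of_isCut isCut_upperCut i

end MorsificationType

section SplitRel

variable {α β γ : Type*}

/-- The strict order on `α` comparing `f a` and `f b` for `r` first, and `s a` and `s b` when these
coincide. -/
def SplitRel (r : β → β → Prop) (f : α → β) (s : α → ℤ) (a b : α) : Prop :=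
  r (f a) (f b) ∨ f a = f b ∧ s a < s b

theorem splitRel_isStrictTotalOrder {r : β → β → Prop} [IsStrictTotalOrder β r] {f : α → β}
    {s : α → ℤ} (hs : ∀ a b, f a = f b → s a = s b → a = b) :
    IsStrictTotalOrder α (SplitRel r f s) where
  trichotomous a b := by
    have := trichotomous_of r (f a) (f b)
    grind [SplitRel]
  irrefl a := by
    have := irrefl_of r (f a)
    grind [SplitRel]
  trans a b c := by
    have := @trans_of _ r (f a) (f b) (f c) _
    grind [SplitRel]

end SplitRel

section Merge

variable {m l : ℕ}

/-- The renumbering of the branches when the critical points `p` and `p + 1` are merged, so that the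
branches `p`, `p + 1` and `p + 2` become one (the subtraction is truncated). -/
def mergeBranch (p : Fin (m + 1)) (k : Fin (m + 2 + 1)) : Fin (m + 1) :=
  ⟨min (k : ℕ) p + (k - (p + 2)), by omega⟩

/-- The renumbering of the marked points when the critical points `p` and `p + 1` are merged to the
new boundary point `0`. -/
def mergePoint (p : Fin (m + 1)) : Fin (m + 2) ⊕ Fin l → Fin m ⊕ Fin (l + 1)
  | .inl j =>
    if h : (j : ℕ) < p then .inl ⟨j, by omega⟩
    else if h' : (j : ℕ) ≤ p + 1 then .inr 0 else .inl ⟨j - 2, by omega⟩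
  | .inr i => .inr i.succ

/-- The section of `mergePoint p` sending the boundary point `0` to the critical point `p`. -/
def splitPoint (p : Fin (m + 1)) : Fin m ⊕ Fin (l + 1) → Fin (m + 2) ⊕ Fin l
  | .inl j => .inl ⟨if (j : ℕ) < p then j else j + 2, by grind⟩
  | .inr i => Fin.cases (.inl p.castSucc) .inr i

/-- Among the branches outside the critical points `p` and `p + 1`, the one above their values. -/
def upperBranch (p : Fin (m + 1)) : Fin (m + 2 + 1) :=
  if Even (p : ℕ) then p.castSucc.castSucc else p.succ.succ

/-- Among the branches outside the critical points `p` and `p + 1`, the one below their values. -/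
def lowerBranch (p : Fin (m + 1)) : Fin (m + 2 + 1) :=
  if Even (p : ℕ) then p.succ.succ else p.castSucc.castSucc

theorem mergePoint_splitPoint (p : Fin (m + 1)) (a : Fin m ⊕ Fin (l + 1)) :
    mergePoint p (splitPoint p a) = a := by
  rcases a with j | i
  · simp only [splitPoint, mergePoint]
    grind
  · cases i using Fin.cases <;> simp [splitPoint, mergePoint]

theorem mergePoint_eq_inr_zero_iff {p : Fin (m + 1)} {a : Fin (m + 2) ⊕ Fin l} :
    mergePoint p a = .inr 0 ↔ a = .inl (pairMin p) ∨ a = .inl (pairMax p) := by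
  rcases a with j | i
  · simp only [mergePoint, pairMin, pairMax, Sum.inl.injEq, Fin.ext_iff]
    grind
  · simp [mergePoint]

theorem eq_of_mergePoint_eq {p : Fin (m + 1)} {a b : Fin (m + 2) ⊕ Fin l}
    (h : mergePoint p a = mergePoint p b) (ha : mergePoint p a ≠ .inr 0) : a = b := by
  rcases a with j | i <;> rcases b with j' | i' <;> simp only [mergePoint] at h ha <;>
    grind [Fin.succ_ne_zero, Fin.succ_inj]

theorem morseSign_pairMin (p : Fin (m + 1)) :
    morseSign (.inl (pairMin p) : Fin (m + 2) ⊕ Fin l) = -1 := by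
  simp only [morseSign, pairMin]
  grind

theorem morseSign_pairMax (p : Fin (m + 1)) :
    morseSign (.inl (pairMax p) : Fin (m + 2) ⊕ Fin l) = 1 := by
  simp only [morseSign, pairMax]
  grind

theorem morseSign_mergePoint {p : Fin (m + 1)} {a : Fin (m + 2) ⊕ Fin l}
    (ha : mergePoint p a ≠ .inr 0) : morseSign (mergePoint p a) = morseSign a := by
  rcases a with j | i
  · simp only [morseSign, mergePoint] at ha ⊢
    grind
  · rfl

theorem morseSign_inr (i : Fin l) : morseSign (.inr i : Fin m ⊕ Fin l) = 0 :=
  rfl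

theorem exists_eq_inr_of_morseSign_nonpos {a b : Fin m ⊕ Fin l} (hab : morseSign a < morseSign b)
    (hb : morseSign b ≤ 0) : ∃ i, b = .inr i := by
  rcases a with j | i <;> rcases b with j' | i' <;> simp only [morseSign] at hab hb <;> grind

theorem exists_eq_inr_of_morseSign_nonneg {a b : Fin m ⊕ Fin l} (hab : morseSign a < morseSign b)
    (ha : 0 ≤ morseSign a) : ∃ i, a = .inr i := by
  rcases a with j | i <;> rcases b with j' | i' <;> simp only [morseSign] at hab ha <;> grind

theorem eq_of_mergePoint_eq_of_morseSign_eq {p : Fin (m + 1)} {a b : Fin (m + 2) ⊕ Fin l}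
    (h : mergePoint p a = mergePoint p b) (hs : morseSign a = morseSign b) : a = b := by
  by_cases ha : mergePoint p a = .inr 0
  · have hb := h.symm.trans ha
    rw [mergePoint_eq_inr_zero_iff] at ha hb
    rcases ha with rfl | rfl <;> rcases hb with rfl | rfl <;>
      simp_all [morseSign_pairMin, morseSign_pairMax]
  · exact eq_of_mergePoint_eq h ha

theorem touches_mergePoint_iff {p k : Fin (m + 1)} {β : Fin l → Fin (m + 2 + 1)}
    {a : Fin (m + 2) ⊕ Fin l} :
    Touches (Fin.cons p (mergeBranch p ∘ β)) k (mergePoint p a) ↔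
      ∃ k', Touches β k' a ∧ mergeBranch p k' = k := by
  rcases a with j | i
  · have hrhs : (∃ k', Touches β k' (.inl j) ∧ mergeBranch p k' = k) ↔
        mergeBranch p j.castSucc = k ∨ mergeBranch p j.succ = k := by
      simp only [Touches, or_and_right, exists_or, exists_eq_left]
    rw [hrhs]
    simp only [mergePoint, mergeBranch]
    split_ifs <;> simp only [Touches, Fin.cons_zero, Fin.ext_iff] <;> grind
  · simp [mergePoint, Touches, eq_comm]

theorem mergeBranch_eq_iff {p : Fin (m + 1)} {k : Fin (m + 2 + 1)} :
    mergeBranch p k = p ↔ k = upperBranch p ∨ k = p.succ.castSucc ∨ k = lowerBranch p := by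
  simp only [mergeBranch, upperBranch, lowerBranch, Fin.ext_iff]
  grind

theorem eq_of_mergeBranch_eq {p : Fin (m + 1)} {k k' : Fin (m + 2 + 1)}
    (h : mergeBranch p k = mergeBranch p k') (hk : mergeBranch p k ≠ p) : k = k' := by
  simp only [mergeBranch, ne_eq, Fin.ext_iff] at h hk ⊢
  grind

theorem touches_pairMin_iff {p : Fin (m + 1)} {β : Fin l → Fin (m + 2 + 1)} {k : Fin (m + 2 + 1)} :
    Touches β k (.inl (pairMin p)) ↔ k = upperBranch p ∨ k = p.succ.castSucc := by
  simp only [Touches, pairMin, upperBranch, Fin.ext_iff]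
  grind

theorem touches_pairMax_iff {p : Fin (m + 1)} {β : Fin l → Fin (m + 2 + 1)} {k : Fin (m + 2 + 1)} :
    Touches β k (.inl (pairMax p)) ↔ k = lowerBranch p ∨ k = p.succ.castSucc := by
  simp only [Touches, pairMax, lowerBranch, Fin.ext_iff]
  grind

theorem pairMin_forced {p : Fin (m + 1)} {β : Fin l → Fin (m + 2 + 1)} {a : Fin (m + 2) ⊕ Fin l}
    (h : Touches β (upperBranch p) a) (ha : mergePoint p a ≠ .inr 0) :
    Forced β (.inl (pairMin p)) a := by
  refine ⟨⟨_, touches_pairMin_iff.2 (.inl rfl), h⟩, ?_⟩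
  rcases a with j | i <;>
    simp only [Touches, mergePoint, morseSign, pairMin, upperBranch, Fin.ext_iff] at h ha ⊢ <;>
      grind

theorem forced_pairMax {p : Fin (m + 1)} {β : Fin l → Fin (m + 2 + 1)} {a : Fin (m + 2) ⊕ Fin l}
    (h : Touches β (lowerBranch p) a) (ha : mergePoint p a ≠ .inr 0) :
    Forced β a (.inl (pairMax p)) := by
  refine ⟨⟨_, h, touches_pairMax_iff.2 (.inl rfl)⟩, ?_⟩
  rcases a with j | i <;>
    simp only [Touches, mergePoint, morseSign, pairMax, lowerBranch, Fin.ext_iff] at h ha ⊢ <;>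
    grind

end Merge

namespace MorsificationType

variable {m l : ℕ}

section Collapse

variable {p : Fin (m + 1)} {τ : MorsificationType (m + 2) l}

theorem IsCollapsible.lt_left_congr (hτ : τ.IsCollapsible p) {a a' b : Fin (m + 2) ⊕ Fin l}
    (ha : mergePoint p a = mergePoint p a') (hab : mergePoint p a ≠ mergePoint p b) :
    τ.lt a b ↔ τ.lt a' b := by
  by_cases ha₀ : mergePoint p a = .inr 0
  · have hb : b ≠ .inl (pairMax p) := fun hb =>
      hab (ha₀.trans (mergePoint_eq_inr_zero_iff.2 (.inr hb)).symm)
    have := hτ.rel_right_iff hb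
    rcases mergePoint_eq_inr_zero_iff.1 ha₀ with rfl | rfl <;>
    rcases mergePoint_eq_inr_zero_iff.1 (ha.symm.trans ha₀) with rfl | rfl <;>
    simp only [this]
  · rw [eq_of_mergePoint_eq ha ha₀]

theorem IsCollapsible.lt_right_congr (hτ : τ.IsCollapsible p) {a b b' : Fin (m + 2) ⊕ Fin l}
    (hb : mergePoint p b = mergePoint p b') (hab : mergePoint p a ≠ mergePoint p b) :
    τ.lt a b ↔ τ.lt a b' := by
  by_cases hb₀ : mergePoint p b = .inr 0
  · have ha : a ≠ .inl (pairMin p) := fun ha =>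
      hab ((mergePoint_eq_inr_zero_iff.2 (.inl ha)).trans hb₀.symm)
    have := hτ.rel_left_iff ha
    rcases mergePoint_eq_inr_zero_iff.1 hb₀ with rfl | rfl <;>
    rcases mergePoint_eq_inr_zero_iff.1 (hb.symm.trans hb₀) with rfl | rfl <;>
    simp only [this]
  · rw [eq_of_mergePoint_eq hb hb₀]

theorem IsCollapsible.branch_ne (hτ : τ.IsCollapsible p) (i : Fin l) :
    τ.branch i ≠ p.succ.castSucc := fun h =>
  hτ.2 (.inr i)
    (τ.lt_of_forced _ _ ((forced_inr_iff ..).2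
      ⟨touches_pairMin_iff.2 (.inr h), by simp [morseSign_pairMin]⟩))
    (τ.lt_of_forced _ _ ((inr_forced_iff ..).2
      ⟨touches_pairMax_iff.2 (.inr h), by simp [morseSign_pairMax]⟩))

theorem IsCollapsible.touches_outer (hτ : τ.IsCollapsible p) {a : Fin (m + 2) ⊕ Fin l}
    (ha : mergePoint p a ≠ .inr 0)
    (h : Touches (Fin.cons p (mergeBranch p ∘ τ.branch)) p (mergePoint p a)) :
    Touches τ.branch (upperBranch p) a ∨ Touches τ.branch (lowerBranch p) a := by
  obtain ⟨k, hk, hkp⟩ := touches_mergePoint_iff.1 h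
  rcases mergeBranch_eq_iff.1 hkp with rfl | rfl | rfl
  · exact .inl hk
  · rcases a with j | i
    · have hj : j = pairMin p ∨ j = pairMax p := by
        simp only [Touches, pairMin, pairMax, Fin.ext_iff] at hk ⊢
        grind
      exact absurd (mergePoint_eq_inr_zero_iff.2 (hj.imp (congrArg _) (congrArg _))) ha
    · exact absurd hk.symm (hτ.branch_ne i)
  · exact .inr hk

theorem IsCollapsible.lt_of_touches_upperBranch (hτ : τ.IsCollapsible p)
    {a c : Fin (m + 2) ⊕ Fin l} (h : Touches τ.branch (upperBranch p) a)
    (ha : mergePoint p a ≠ .inr 0) (hc : mergePoint p c = .inr 0) : τ.lt c a :=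
  (hτ.lt_left_congr (hc.trans (mergePoint_eq_inr_zero_iff.2 (.inl rfl)).symm)
    fun hca => ha (hca.symm.trans hc)).2 (τ.lt_of_forced _ _ (pairMin_forced h ha))

theorem IsCollapsible.lt_of_touches_lowerBranch (hτ : τ.IsCollapsible p)
    {a c : Fin (m + 2) ⊕ Fin l} (h : Touches τ.branch (lowerBranch p) a)
    (ha : mergePoint p a ≠ .inr 0) (hc : mergePoint p c = .inr 0) : τ.lt a c :=
  (hτ.lt_right_congr (hc.trans (mergePoint_eq_inr_zero_iff.2 (.inr rfl)).symm)
    fun hac => ha (hac.trans hc)).2 (τ.lt_of_forced _ _ (forced_pairMax h ha))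

theorem IsCollapsible.lt_of_touches_merged (hτ : τ.IsCollapsible p) {a b : Fin (m + 2) ⊕ Fin l}
    (ha : Touches (Fin.cons p (mergeBranch p ∘ τ.branch)) p (mergePoint p a))
    (hb : Touches (Fin.cons p (mergeBranch p ∘ τ.branch)) p (mergePoint p b))
    (hs : morseSign (mergePoint p a) < morseSign (mergePoint p b)) : τ.lt a b := by
  have sign_upper : ∀ c, Touches τ.branch (upperBranch p) c → mergePoint p c ≠ .inr 0 →
      0 ≤ morseSign c := fun c h hc => by
    simpa [morseSign_pairMin] using Int.add_one_le_of_lt (pairMin_forced h hc).2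
  have sign_lower : ∀ c, Touches τ.branch (lowerBranch p) c → mergePoint p c ≠ .inr 0 →
      morseSign c ≤ 0 := fun c h hc => by
    simpa [morseSign_pairMax] using Int.le_sub_one_of_lt (forced_pairMax h hc).2
  have hab : mergePoint p a ≠ mergePoint p b := fun hab => lt_irrefl _ (hab ▸ hs)
  by_cases ha₀ : mergePoint p a = .inr 0
  · have hb₀ : mergePoint p b ≠ .inr 0 := fun hb₀ => hab (ha₀.trans hb₀.symm)
    rw [ha₀, morseSign_mergePoint hb₀] at hs
    exact hτ.lt_of_touches_upperBranch ((hτ.touches_outer hb₀ hb).resolve_right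
      fun h => (sign_lower b h hb₀).not_gt hs) hb₀ ha₀
  by_cases hb₀ : mergePoint p b = .inr 0
  · rw [hb₀, morseSign_mergePoint ha₀] at hs
    exact hτ.lt_of_touches_lowerBranch ((hτ.touches_outer ha₀ ha).resolve_left
      fun h => (sign_upper a h ha₀).not_gt hs) ha₀ hb₀
  rw [morseSign_mergePoint ha₀, morseSign_mergePoint hb₀] at hs
  rcases hτ.touches_outer ha₀ ha with ha | ha <;> rcases hτ.touches_outer hb₀ hb with hb | hb
  · exact τ.lt_of_forced a b ⟨⟨_, ha, hb⟩, hs⟩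
  · exact absurd hs ((sign_lower b hb hb₀).trans (sign_upper a ha ha₀)).not_gt
  · have hc : mergePoint p (.inl (pairMin p) : Fin (m + 2) ⊕ Fin l) = .inr 0 :=
      mergePoint_eq_inr_zero_iff.2 (.inl rfl)
    exact trans_of τ.lt (hτ.lt_of_touches_lowerBranch ha ha₀ hc)
      (hτ.lt_of_touches_upperBranch hb hb₀ hc)
  · exact τ.lt_of_forced a b ⟨⟨_, ha, hb⟩, hs⟩

theorem IsCollapsible.lt_of_forced_mergePoint (hτ : τ.IsCollapsible p)
    {a b : Fin (m + 2) ⊕ Fin l}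
    (h : Forced (Fin.cons p (mergeBranch p ∘ τ.branch)) (mergePoint p a) (mergePoint p b)) :
    τ.lt a b := by
  obtain ⟨⟨k, ha, hb⟩, hs⟩ := h
  rcases ne_or_eq k p with hk | rfl
  · have ne_zero : ∀ c, Touches (Fin.cons p (mergeBranch p ∘ τ.branch)) k (mergePoint p c) →
        mergePoint p c ≠ .inr 0 := fun c hc hc₀ => by
      rw [hc₀] at hc
      exact hk hc
    obtain ⟨k₁, ha₁, rfl⟩ := touches_mergePoint_iff.1 ha
    obtain ⟨k₂, hb₂, h₂₁⟩ := touches_mergePoint_iff.1 hb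
    rw [morseSign_mergePoint (ne_zero a ha), morseSign_mergePoint (ne_zero b hb)] at hs
    exact τ.lt_of_forced a b ⟨⟨k₁, ha₁, eq_of_mergeBranch_eq h₂₁ (h₂₁ ▸ hk) ▸ hb₂⟩, hs⟩
  · exact hτ.lt_of_touches_merged ha hb hs

/-- The type obtained by merging the neighbouring critical values of `p` and `p + 1`. -/
def collapse (τ : MorsificationType (m + 2) l) (hτ : τ.IsCollapsible p) :
    MorsificationType m (l + 1) where
  branch := Fin.cons p (mergeBranch p ∘ τ.branch)
  lt := splitPoint p ⁻¹'o τ.lt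
  isStrictTotalOrder := (RelEmbedding.preimage
    ⟨splitPoint p, Function.LeftInverse.injective (mergePoint_splitPoint p)⟩
    τ.lt).isStrictTotalOrder
  lt_of_forced a b h := hτ.lt_of_forced_mergePoint (by simpa only [mergePoint_splitPoint] using h)

theorem lt_iff_splitRel_collapse (hτ : τ.IsCollapsible p) (a b : Fin (m + 2) ⊕ Fin l) :
    τ.lt a b ↔ SplitRel (τ.collapse hτ).lt (mergePoint p) morseSign a b := by
  have split_merge : ∀ c : Fin (m + 2) ⊕ Fin l,
      mergePoint p (splitPoint p (mergePoint p c)) = mergePoint p c :=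
    fun c => mergePoint_splitPoint p (mergePoint p c)
  have same := irrefl_of (τ.collapse hτ).lt (mergePoint p a)
  by_cases hab : mergePoint p a = mergePoint p b
  · rw [SplitRel, ← hab, or_iff_right same, and_iff_right rfl]
    by_cases ha₀ : mergePoint p a = .inr 0
    · have h₁ := asymm_of τ.lt hτ.1
      have h₂ := irrefl_of τ.lt
      rcases mergePoint_eq_inr_zero_iff.1 ha₀ with rfl | rfl <;>
      rcases mergePoint_eq_inr_zero_iff.1 (hab.symm.trans ha₀) with rfl | rfl <;>
      simp [morseSign_pairMin, morseSign_pairMax, h₁, h₂, hτ.1]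
    · simp [eq_of_mergePoint_eq hab ha₀, irrefl_of τ.lt]
  · rw [SplitRel, or_iff_left fun h => hab h.1,
      hτ.lt_left_congr (split_merge a).symm hab,
      hτ.lt_right_congr (split_merge b).symm (by rwa [split_merge])]
    rfl

end Collapse

/-- The branch of the `i`-th boundary point after the boundary point `0` of `σ` has been split into
two critical points. -/
noncomputable def splitBranch (σ : MorsificationType m (l + 1)) (i : Fin l) : Fin (m + 2 + 1) :=
  open scoped Classical in
  if σ.branch i.succ = σ.branch 0 then
    if σ.lt (.inr 0) (.inr i.succ) then upperBranch (σ.branch 0) else lowerBranch (σ.branch 0)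
  else ⟨if σ.branch i.succ < σ.branch 0 then σ.branch i.succ else σ.branch i.succ + 2, by grind⟩

theorem mergeBranch_splitBranch (σ : MorsificationType m (l + 1)) (i : Fin l) :
    mergeBranch (σ.branch 0) (σ.splitBranch i) = σ.branch i.succ := by
  simp only [splitBranch]
  split_ifs with h h'
  · exact (mergeBranch_eq_iff.2 (.inl rfl)).trans h.symm
  · exact (mergeBranch_eq_iff.2 (.inr (.inr rfl))).trans h.symm
  all_goals
    simp only [mergeBranch, Fin.ext_iff] at h ⊢
    grind

theorem branch_eq_splitBranch_collapse {p : Fin (m + 1)} {τ : MorsificationType (m + 2) l}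
    (hτ : τ.IsCollapsible p) (i : Fin l) : τ.branch i = (τ.collapse hτ).splitBranch i := by
  have hi : mergePoint p (.inr i : Fin (m + 2) ⊕ Fin l) ≠ .inr 0 := by simp [mergePoint]
  have hc : mergePoint p (.inl p.castSucc : Fin (m + 2) ⊕ Fin l) = .inr 0 := by simp [mergePoint]
  have hmerge : mergeBranch p (τ.branch i) = mergeBranch p ((τ.collapse hτ).splitBranch i) :=
    ((τ.collapse hτ).mergeBranch_splitBranch i).symm
  by_cases hp : mergeBranch p (τ.branch i) = p
  · have hsucc : (τ.collapse hτ).branch i.succ = (τ.collapse hτ).branch 0 := hp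
    rw [splitBranch, if_pos hsucc]
    rcases mergeBranch_eq_iff.1 hp with h | h | h
    · have hlt : (τ.collapse hτ).lt (.inr 0) (.inr i.succ) :=
        hτ.lt_of_touches_upperBranch (a := .inr i) h.symm hi hc
      rw [if_pos hlt]
      exact h
    · exact absurd h (hτ.branch_ne i)
    · have hlt : (τ.collapse hτ).lt (.inr i.succ) (.inr 0) :=
        hτ.lt_of_touches_lowerBranch (a := .inr i) h.symm hi hc
      rw [if_neg (asymm_of (τ.collapse hτ).lt hlt)]
      exact h
  · exact eq_of_mergeBranch_eq hmerge hp

theorem eq_of_collapse_eq {p : Fin (m + 1)} {τ τ' : MorsificationType (m + 2) l}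
    (hτ : τ.IsCollapsible p) (hτ' : τ'.IsCollapsible p) (h : τ.collapse hτ = τ'.collapse hτ') :
    τ = τ' := by
  refine MorsificationType.ext ?_ ?_
  · funext i
    rw [branch_eq_splitBranch_collapse hτ, branch_eq_splitBranch_collapse hτ', h]
  · funext a b
    rw [eq_iff_iff, lt_iff_splitRel_collapse hτ, lt_iff_splitRel_collapse hτ', h]

theorem lt_of_pairMin_forced (σ : MorsificationType m (l + 1)) {i : Fin l}
    (h : Forced σ.splitBranch (.inl (pairMin (σ.branch 0))) (.inr i)) :
    σ.lt (.inr 0) (.inr i.succ) := by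
  have hi := touches_pairMin_iff.1 ((forced_inr_iff ..).1 h).1
  have hmerge : σ.branch i.succ = σ.branch 0 :=
    (σ.mergeBranch_splitBranch i).symm.trans (mergeBranch_eq_iff.2 (hi.imp_right .inl))
  by_contra hlt
  rw [splitBranch, if_pos hmerge, if_neg hlt] at hi
  simp only [upperBranch, lowerBranch, Fin.ext_iff] at hi
  grind

theorem lt_of_forced_pairMax (σ : MorsificationType m (l + 1)) {i : Fin l}
    (h : Forced σ.splitBranch (.inr i) (.inl (pairMax (σ.branch 0)))) :
    σ.lt (.inr i.succ) (.inr 0) := by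
  have hi := touches_pairMax_iff.1 ((inr_forced_iff ..).1 h).1
  have hmerge : σ.branch i.succ = σ.branch 0 :=
    (σ.mergeBranch_splitBranch i).symm.trans (mergeBranch_eq_iff.2 (by tauto))
  refine (trichotomous_of σ.lt _ _).resolve_right fun hlt => ?_
  rw [splitBranch, if_pos hmerge, if_pos (hlt.resolve_left (by simp))] at hi
  simp only [upperBranch, lowerBranch, Fin.ext_iff] at hi
  grind

theorem lt_mergePoint_of_forced (σ : MorsificationType m (l + 1)) {a b : Fin (m + 2) ⊕ Fin l}
    (h : Forced σ.splitBranch a b) (hs : morseSign (mergePoint (σ.branch 0) a) <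
      morseSign (mergePoint (σ.branch 0) b)) :
    σ.lt (mergePoint (σ.branch 0) a) (mergePoint (σ.branch 0) b) := by
  have hbranch : Fin.cons (σ.branch 0) (mergeBranch (σ.branch 0) ∘ σ.splitBranch) = σ.branch :=
    funext fun i => Fin.cases rfl σ.mergeBranch_splitBranch i
  obtain ⟨k, ha, hb⟩ := h.1
  refine σ.lt_of_forced _ _ ⟨⟨mergeBranch (σ.branch 0) k, ?_, ?_⟩, hs⟩ <;> rw [← hbranch]
  exacts [touches_mergePoint_iff.2 ⟨k, ha, rfl⟩, touches_mergePoint_iff.2 ⟨k, hb, rfl⟩]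

theorem splitRel_of_forced (σ : MorsificationType m (l + 1)) {a b : Fin (m + 2) ⊕ Fin l}
    (h : Forced σ.splitBranch a b) : SplitRel σ.lt (mergePoint (σ.branch 0)) morseSign a b := by
  by_cases hab : mergePoint (σ.branch 0) a = mergePoint (σ.branch 0) b
  · exact .inr ⟨hab, h.2⟩
  refine .inl ?_
  by_cases hs : morseSign (mergePoint (σ.branch 0) a) < morseSign (mergePoint (σ.branch 0) b)
  · exact σ.lt_mergePoint_of_forced h hs
  by_cases ha₀ : mergePoint (σ.branch 0) a = .inr 0
  · have hb₀ : mergePoint (σ.branch 0) b ≠ .inr 0 := fun hb₀ => hab (ha₀.trans hb₀.symm)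
    rw [ha₀, morseSign_mergePoint hb₀] at hs
    obtain rfl | rfl := mergePoint_eq_inr_zero_iff.1 ha₀
    · obtain ⟨i, rfl⟩ := exists_eq_inr_of_morseSign_nonpos h.2 (not_lt.1 hs)
      exact ha₀ ▸ σ.lt_of_pairMin_forced h
    · exact absurd (h.2.trans_le (not_lt.1 hs)) (by simp [morseSign_pairMax, morseSign_inr])
  by_cases hb₀ : mergePoint (σ.branch 0) b = .inr 0
  · rw [hb₀, morseSign_mergePoint ha₀] at hs
    obtain rfl | rfl := mergePoint_eq_inr_zero_iff.1 hb₀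
    · exact absurd ((not_lt.1 hs).trans_lt h.2) (by simp [morseSign_pairMin, morseSign_inr])
    · obtain ⟨i, rfl⟩ := exists_eq_inr_of_morseSign_nonneg h.2 (not_lt.1 hs)
      exact hb₀ ▸ σ.lt_of_forced_pairMax h
  · exact absurd (by rw [morseSign_mergePoint ha₀, morseSign_mergePoint hb₀]; exact h.2) hs

/-- The type obtained by splitting the boundary point `0` of `σ` into two critical points with
neighbouring values. -/
noncomputable def expand (σ : MorsificationType m (l + 1)) : MorsificationType (m + 2) l where
  branch := σ.splitBranch
  lt := SplitRel σ.lt (mergePoint (σ.branch 0)) morseSign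
  isStrictTotalOrder :=
    splitRel_isStrictTotalOrder fun _ _ => eq_of_mergePoint_eq_of_morseSign_eq
  lt_of_forced _ _ := σ.splitRel_of_forced

theorem expand_isCollapsible (σ : MorsificationType m (l + 1)) :
    σ.expand.IsCollapsible (σ.branch 0) := by
  have hmin : mergePoint (σ.branch 0) (.inl (pairMin (σ.branch 0)) : Fin (m + 2) ⊕ Fin l) =
      .inr 0 :=
    mergePoint_eq_inr_zero_iff.2 (.inl rfl)
  have hmax : mergePoint (σ.branch 0) (.inl (pairMax (σ.branch 0)) : Fin (m + 2) ⊕ Fin l) =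
      .inr 0 :=
    mergePoint_eq_inr_zero_iff.2 (.inr rfl)
  refine ⟨.inr ⟨hmin.trans hmax.symm, by simp [morseSign_pairMin, morseSign_pairMax]⟩, ?_⟩
  intro c h₁ h₂
  simp only [expand, SplitRel, hmin, hmax] at h₁ h₂
  rcases h₁ with h₁ | h₁ <;> rcases h₂ with h₂ | h₂
  · exact asymm_of σ.lt h₁ h₂
  · exact irrefl_of σ.lt _ (h₂.1 ▸ h₁)
  · exact irrefl_of σ.lt _ (h₁.1 ▸ h₂)
  · rcases mergePoint_eq_inr_zero_iff.1 h₂.1 with rfl | rfl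
    exacts [lt_irrefl _ h₁.2, lt_irrefl _ h₂.2]

theorem collapse_expand (σ : MorsificationType m (l + 1)) :
    σ.expand.collapse σ.expand_isCollapsible = σ := by
  refine MorsificationType.ext ?_ ?_
  · funext i
    cases i using Fin.cases
    exacts [rfl, σ.mergeBranch_splitBranch _]
  · funext a b
    simp only [collapse, expand, Order.Preimage, SplitRel, mergePoint_splitPoint, eq_iff_iff]
    refine or_iff_left ?_
    rintro ⟨rfl, h⟩
    exact lt_irrefl _ h

theorem card_isCollapsible (p : Fin (m + 1)) :
    Nat.card {τ : MorsificationType (m + 2) l // τ.IsCollapsible p} =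
      Nat.card {σ : MorsificationType m (l + 1) // σ.branch 0 = p} := by
  refine Nat.card_eq_of_bijective (fun τ => ⟨τ.1.collapse τ.2, rfl⟩) ⟨?_, ?_⟩
  · exact fun τ τ' h => Subtype.ext (eq_of_collapse_eq τ.2 τ'.2 (congrArg Subtype.val h))
  · rintro ⟨σ, rfl⟩
    exact ⟨⟨σ.expand, σ.expand_isCollapsible⟩, Subtype.ext σ.collapse_expand⟩

open scoped Classical in
theorem sum_ite_eq_card (S : MorsificationType m l → Prop) :
    ∑ τ : MorsificationType m l, (if S τ then (1 : ℤ) else 0) =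
      (Nat.card {τ : MorsificationType m l // S τ} : ℤ) := by
  rw [Finset.sum_boole, Nat.card_eq_fintype_card, Fintype.card_subtype]

theorem sum_card_isCollapsible :
    ∑ p : Fin (m + 1), Nat.card {τ : MorsificationType (m + 2) l // τ.IsCollapsible p} =
      Nat.card (MorsificationType m (l + 1)) := by
  simp only [card_isCollapsible]
  rw [← Nat.card_sigma]
  exact Nat.card_congr (Equiv.sigmaFiberEquiv fun σ : MorsificationType m (l + 1) => σ.branch 0)

theorem card_recurrence :
    Nat.card (MorsificationType (m + 2) (l + 1)) = Nat.card (MorsificationType m (l + 2)) +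
      (m + 3) * (l + 1) * Nat.card (MorsificationType (m + 2) l) := by
  have hsum := Fintype.sum_congr _ _ (sum_covers_split (m := m) (l := l + 1))
  simp only [Finset.sum_add_distrib, sum_free_pairs, ← Finset.mul_sum, Finset.sum_const,
    Finset.card_univ, add_zero] at hsum
  conv at hsum in (occs := *) (∑ _ : MorsificationType (m + 2) (l + 1), ∑ _, _) =>
    all_goals rw [Finset.sum_comm]
  simp only [sum_ite_eq_card, card_atBottom, card_atTop, Finset.sum_const, Finset.card_univ,
    ← Nat.cast_sum, sum_card_isCollapsible, ← Nat.card_eq_fintype_card, Nat.card_fin,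
    nsmul_eq_mul] at hsum
  push_cast at hsum
  zify
  linarith

end MorsificationType

section ProperLocalHomeomorph

variable {X Y : Type*} [TopologicalSpace X] [TopologicalSpace Y] {f : X → Y}

theorem isCoveringMap_of_isProperMap [T2Space X] (hloc : IsLocalHomeomorph f)
    (hprop : IsProperMap f) [T1Space Y] : IsCoveringMap f := by
  rw [isCoveringMap_iff_isCoveringMapOn_univ]
  refine hprop.isClosedMap.isCoveringMapOn_of_isLocalHomeomorphOn (fun y _ => ?_)
    (hloc.isLocalHomeomorphOn.mono (Set.subset_univ _))
  refine (hprop.isCompact_preimage isCompact_singleton).finite ?_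
  refine IsDiscrete.of_openPartialHomeomorph f subset_rfl fun x _ => ?_
  obtain ⟨φ, hx, hφ⟩ := hloc x
  exact ⟨φ, hx, hφ.symm⟩

theorem isHomeomorph_of_isCoveringMap [ConnectedSpace X] [SimplyConnectedSpace Y]
    [LocallyPathConnectedSpace Y] (hf : IsCoveringMap f) : IsHomeomorph f := by
  obtain ⟨x₀⟩ := ‹ConnectedSpace X›.toNonempty
  obtain ⟨S, ⟨hS₀, hfS⟩, -⟩ :=
    hf.existsUnique_continuousMap_lifts (ContinuousMap.id Y) (f x₀) x₀ rfl
  have hSf : S ∘ f = id :=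
    hf.eq_of_comp_eq (S.continuous.comp hf.continuous) continuous_id
      (by rw [← Function.comp_assoc, hfS]; rfl) x₀ hS₀
  exact isHomeomorph_iff_exists_inverse.2
    ⟨hf.continuous, S, congrFun hSf, congrFun hfS, S.continuous⟩

theorem isConnected_inter_preimage_of_isHomeomorph {Z : Set X} {W C : Set Y}
    {hmaps : Set.MapsTo f Z W} (h : IsHomeomorph (hmaps.restrict f Z W)) (hCW : C ⊆ W)
    (hC : IsConnected C) : IsConnected (Z ∩ f ⁻¹' C) := by
  have hC' : IsConnected (Subtype.val ⁻¹' C : Set W) := by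
    rwa [IsConnected, ← Topology.IsInducing.subtypeVal.isPreconnected_image,
      ← Set.image_nonempty (f := Subtype.val), Subtype.image_preimage_coe,
      Set.inter_eq_right.2 hCW]
  convert (h.homeomorph.isConnected_preimage.2 hC').image Subtype.val
    continuous_subtype_val.continuousOn using 1
  ext z
  exact ⟨fun hz => ⟨⟨z, hz.1⟩, hz.2, rfl⟩, by rintro ⟨z, hz, rfl⟩; exact ⟨z.2, hz⟩⟩

end ProperLocalHomeomorph

section GlobalInversion

variable {E : Type*} [NormedAddCommGroup E] [NormedSpace ℝ E] [FiniteDimensional ℝ E]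
  {Z W : Set E} {G : E → E}

theorem isLocalHomeomorphOn_of_fderiv_injective (hG : ContDiff ℝ 1 G)
    (hinj : ∀ z ∈ Z, Function.Injective (fderiv ℝ G z)) : IsLocalHomeomorphOn G Z := by
  intro z hz
  let e : E ≃L[ℝ] E :=
    (LinearEquiv.ofInjectiveEndo (fderiv ℝ G z : E →ₗ[ℝ] E) (hinj z hz)).toContinuousLinearEquiv
  have he : HasFDerivAt G (e : E →L[ℝ] E) z := (hG.differentiable one_ne_zero z).hasFDerivAt
  exact ⟨hG.contDiffAt.toOpenPartialHomeomorph G he one_ne_zero,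
    hG.contDiffAt.mem_toOpenPartialHomeomorph_source he one_ne_zero, rfl⟩

theorem isProperMap_mapsTo_restrict (hG : Continuous G) (hW : IsOpen W) (hmaps : Set.MapsTo G Z W)
    (hprop : ∀ K ⊆ W, IsCompact K → IsCompact (Z ∩ G ⁻¹' K)) :
    IsProperMap (hmaps.restrict G Z W) := by
  have : LocallyCompactSpace W := hW.locallyCompactSpace
  refine isProperMap_iff_isCompact_preimage.2 ⟨hG.continuousOn.mapsToRestrict hmaps, fun K hK => ?_⟩
  rw [Subtype.isCompact_iff]
  convert hprop (Subtype.val '' K) (Subtype.coe_image_subset W K)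
    (hK.image continuous_subtype_val) using 1
  ext z
  constructor
  · rintro ⟨z, hz, rfl⟩
    exact ⟨z.2, _, hz, rfl⟩
  · rintro ⟨hz, w, hw, hwz⟩
    obtain rfl : w = hmaps.restrict G Z W ⟨z, hz⟩ := Subtype.ext hwz
    exact ⟨⟨z, hz⟩, hw, rfl⟩

theorem isHomeomorph_mapsTo_restrict (hZ : IsOpen Z) (hW : IsOpen W) (hZc : Convex ℝ Z)
    (hWc : Convex ℝ W) (hZn : Z.Nonempty) (hG : ContDiff ℝ 1 G)
    (hinj : ∀ z ∈ Z, Function.Injective (fderiv ℝ G z)) (hmaps : Set.MapsTo G Z W)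
    (hprop : ∀ K ⊆ W, IsCompact K → IsCompact (Z ∩ G ⁻¹' K)) :
    IsHomeomorph (hmaps.restrict G Z W) := by
  have : ContractibleSpace W := hWc.contractibleSpace (hZn.image G |>.mono hmaps.image_subset)
  have : LocallyPathConnectedSpace W := hW.locallyPathConnectedSpace
  have : ConnectedSpace Z := isConnected_iff_connectedSpace.1 (hZc.isConnected hZn)
  have hlocZ : IsLocalHomeomorph (fun z : Z => G z) := by
    rw [isLocalHomeomorph_iff_isLocalHomeomorphOn_univ]
    exact (isLocalHomeomorphOn_of_fderiv_injective hG hinj).comp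
      hZ.isOpenEmbedding_subtypeVal.isLocalHomeomorph.isLocalHomeomorphOn fun z _ => z.2
  have hloc : IsLocalHomeomorph (hmaps.restrict G Z W) :=
    IsLocalHomeomorph.of_comp (g := (Subtype.val : W → E)) hlocZ
      hW.isOpenEmbedding_subtypeVal.isLocalHomeomorph
      (hG.continuous.continuousOn.mapsToRestrict hmaps)
  exact isHomeomorph_of_isCoveringMap (isCoveringMap_of_isProperMap hloc
    (isProperMap_mapsTo_restrict hG.continuous hW hmaps hprop))

end GlobalInversion

section Antiderivative

variable {K : Type*} [Field K]

/-- The antiderivative of a polynomial with vanishing constant term. -/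
noncomputable def antideriv (p : K[X]) : K[X] :=
  p.sum fun k a => C (a / (k + 1)) * X ^ (k + 1)

theorem coeff_antideriv_zero (p : K[X]) : (antideriv p).coeff 0 = 0 := by
  simp [antideriv, Polynomial.sum, finsetSum_coeff]

theorem coeff_antideriv_succ (p : K[X]) (k : ℕ) :
    (antideriv p).coeff (k + 1) = p.coeff k / (k + 1) := by
  simp +contextual [antideriv, Polynomial.sum, finsetSum_coeff, coeff_X_pow]

theorem degree_antideriv_lt {p : K[X]} {n : ℕ} (h : p.degree < n) :
    (antideriv p).degree < n + 1 := by
  rw [← Nat.cast_add_one, degree_lt_iff_coeff_zero] at *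
  rintro (_ | k) hk
  · exact coeff_antideriv_zero p
  · rw [coeff_antideriv_succ, h k (by omega), zero_div]

theorem antideriv_zero : antideriv (0 : K[X]) = 0 :=
  sum_zero_index _

theorem eval_antideriv {p : K[X]} {n : ℕ} (h : p.natDegree < n) (t : K) :
    (antideriv p).eval t = ∑ k ∈ Finset.range n, p.coeff k / (k + 1) * t ^ (k + 1) := by
  rw [antideriv, sum_over_range' _ (by simp) n h, eval_finsetSum]
  simp

variable [CharZero K]

theorem derivative_antideriv (p : K[X]) : derivative (antideriv p) = p := by
  ext k
  rw [coeff_derivative, coeff_antideriv_succ, div_mul_cancel₀ _ (Nat.cast_add_one_ne_zero k)]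

theorem eq_antideriv_iff {p q : K[X]} : p = antideriv q ↔ derivative p = q ∧ p.coeff 0 = 0 := by
  refine ⟨?_, fun h => ?_⟩
  · rintro rfl
    exact ⟨derivative_antideriv q, coeff_antideriv_zero q⟩
  · ext (_ | k)
    · rw [h.2, coeff_antideriv_zero]
    · rw [coeff_antideriv_succ, ← h.1, coeff_derivative,
        mul_div_cancel_right₀ _ (Nat.cast_add_one_ne_zero k)]

end Antiderivative

section MorsePoly

variable {m : ℕ}

/-- The monic polynomial of degree `m + 1` with critical points `x` and vanishing constant term. -/
noncomputable def morsePoly (x : Fin m → ℝ) : ℝ[X] :=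
  antideriv (C (m + 1 : ℝ) * Lagrange.nodal Finset.univ x)

theorem derivative_morsePoly (x : Fin m → ℝ) :
    derivative (morsePoly x) = C (m + 1 : ℝ) * Lagrange.nodal Finset.univ x :=
  derivative_antideriv _

theorem contDiff_coeff_nodal {ι : Type*} [Fintype ι] (s : Finset ι) (k : ℕ) :
    ContDiff ℝ 1 fun x : ι → ℝ => (Lagrange.nodal s x).coeff k := by
  classical
  induction s using Finset.induction_on generalizing k with
  | empty => simpa using contDiff_const
  | insert a s ha ih =>
    simp only [Lagrange.nodal_insert_eq_nodal ha, sub_mul, coeff_sub, coeff_C_mul]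
    cases k with
    | zero =>
      simp only [coeff_X_mul_zero]
      have := ih 0
      fun_prop
    | succ k =>
      simp only [coeff_X_mul]
      have := ih k
      have := ih (k + 1)
      fun_prop

theorem coeff_nodal_univ (x : Fin m → ℝ) : (Lagrange.nodal Finset.univ x).coeff m = 1 := by
  simpa [Monic, leadingCoeff] using Lagrange.nodal_monic (s := Finset.univ) (v := x)

theorem coeff_pred_nodal_univ (hm : 0 < m) (x : Fin m → ℝ) :
    (Lagrange.nodal Finset.univ x).coeff (m - 1) = -∑ j, x j := by
  simpa [Lagrange.nodal] using prod_X_sub_C_coeff_card_pred Finset.univ x (by simpa using hm)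

theorem eval_morsePoly (x : Fin m → ℝ) (t : ℝ) : (morsePoly x).eval t =
    ∑ k ∈ Finset.range (m + 1),
      (m + 1) * (Lagrange.nodal Finset.univ x).coeff k / (k + 1) * t ^ (k + 1) := by
  rw [morsePoly, eval_antideriv (n := m + 1)]
  · simp only [coeff_C_mul]
  · exact Nat.lt_succ_of_le ((natDegree_C_mul_le _ _).trans (by simp))

theorem contDiff_eval_morsePoly :
    ContDiff ℝ 1 fun z : (Fin m → ℝ) × ℝ => (morsePoly z.1).eval z.2 := by
  simp only [eval_morsePoly]
  refine ContDiff.sum fun k _ => ?_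
  have := (contDiff_coeff_nodal (Finset.univ : Finset (Fin m)) k).comp
    (contDiff_fst (𝕜 := ℝ) (F := ℝ))
  simp only [Function.comp_def] at this
  fun_prop

/-- The derivative at `x` in the direction `v` of the polynomial with roots `x`, taken
coefficientwise. -/
noncomputable def nodalDeriv (x v : Fin m → ℝ) : ℝ[X] :=
  ∑ k ∈ Finset.range (m + 1),
    C (lineDeriv ℝ (fun x => (Lagrange.nodal Finset.univ x).coeff k) x v) * X ^ k

theorem coeff_nodalDeriv (x v : Fin m → ℝ) {k : ℕ} (hk : k ≤ m) : (nodalDeriv x v).coeff k =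
    lineDeriv ℝ (fun x => (Lagrange.nodal Finset.univ x).coeff k) x v := by
  simp +contextual [nodalDeriv, finsetSum_coeff, coeff_X_pow, Nat.lt_succ_of_le hk]

theorem hasLineDerivAt_coeff_nodal (x v : Fin m → ℝ) {k : ℕ} (hk : k ≤ m) :
    HasLineDerivAt ℝ (fun x => (Lagrange.nodal Finset.univ x).coeff k)
      ((nodalDeriv x v).coeff k) x v := by
  rw [coeff_nodalDeriv x v hk]
  exact ((contDiff_coeff_nodal Finset.univ k).differentiable one_ne_zero
    x).lineDifferentiableAt.hasLineDerivAt

theorem natDegree_nodalDeriv_le (x v : Fin m → ℝ) : (nodalDeriv x v).natDegree ≤ m :=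
  natDegree_sum_le_of_forall_le _ _ fun _ hk =>
    (natDegree_C_mul_X_pow_le _ _).trans (Nat.le_of_lt_succ (Finset.mem_range.1 hk))

theorem degree_nodalDeriv_lt (hm : 0 < m) (x : Fin m → ℝ) {v : Fin m → ℝ} (hv : ∑ j, v j = 0) :
    (nodalDeriv x v).degree < (m - 1 : ℕ) := by
  rw [degree_lt_iff_coeff_zero]
  intro k hk
  rcases lt_or_ge m k with h | h
  · exact coeff_eq_zero_of_natDegree_lt ((natDegree_nodalDeriv_le x v).trans_lt h)
  · rw [coeff_nodalDeriv x v h]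
    obtain rfl | rfl : k = m ∨ k = m - 1 := by omega
    · simp [coeff_nodal_univ, lineDeriv]
    · simp [coeff_pred_nodal_univ hm, lineDeriv, Finset.sum_add_distrib, ← Finset.mul_sum, hv]

theorem nodalDeriv_zero (x : Fin m → ℝ) : nodalDeriv x 0 = 0 := by
  simp [nodalDeriv, lineDeriv]

theorem eval_nodalDeriv (x v : Fin m → ℝ) (t : ℝ) : (nodalDeriv x v).eval t =
    ∑ j, (∏ i ∈ Finset.univ.erase j, (t - x i)) * -v j := by
  have hcoeff : HasLineDerivAt ℝ (fun x => (Lagrange.nodal Finset.univ x).eval t)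
      ((nodalDeriv x v).eval t) x v := by
    have hdeg (x : Fin m → ℝ) : (Lagrange.nodal Finset.univ x).natDegree < m + 1 := by simp
    simp only [eval_eq_sum_range' (hdeg _),
      eval_eq_sum_range' (Nat.lt_succ_of_le (natDegree_nodalDeriv_le x v))]
    exact HasDerivAt.fun_sum fun _ hk => (hasLineDerivAt_coeff_nodal x v
      (Nat.le_of_lt_succ (Finset.mem_range.1 hk))).mul_const _
  refine hcoeff.unique ?_
  simp only [Lagrange.eval_nodal]
  have hfactor (j : Fin m) : HasDerivAt (fun e : ℝ => t - (x + e • v) j) (-v j) 0 := by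
    simpa using (((hasDerivAt_id (0 : ℝ)).mul_const (v j)).const_add (x j)).const_sub t
  simpa [HasLineDerivAt] using HasDerivAt.fun_finsetProd fun j (_ : j ∈ Finset.univ) => hfactor j

theorem hasDerivAt_eval_morsePoly (x v : Fin m → ℝ) (t s : ℝ) :
    HasDerivAt (fun e : ℝ => (morsePoly (x + e • v)).eval (t + e * s))
      ((antideriv (C (m + 1 : ℝ) * nodalDeriv x v)).eval t +
        (m + 1) * (Lagrange.nodal Finset.univ x).eval t * s) 0 := by
  have hdeg (x : Fin m → ℝ) : (Lagrange.nodal Finset.univ x).natDegree < m + 1 := by simp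
  rw [eval_antideriv (n := m + 1), eval_eq_sum_range' (hdeg x), Finset.mul_sum, Finset.sum_mul,
    ← Finset.sum_add_distrib]
  · simp only [eval_morsePoly, coeff_C_mul]
    refine HasDerivAt.fun_sum fun k hk => ?_
    have hpow : HasDerivAt (fun e : ℝ => (t + e * s) ^ (k + 1)) ((k + 1) * t ^ k * s) 0 := by
      simpa using (((hasDerivAt_id (0 : ℝ)).mul_const s).const_add t).fun_pow (k + 1)
    have hcoeff : HasDerivAt (fun e : ℝ => (Lagrange.nodal Finset.univ (x + e • v)).coeff k)
        ((nodalDeriv x v).coeff k) 0 :=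
      hasLineDerivAt_coeff_nodal x v (Nat.le_of_lt_succ (Finset.mem_range.1 hk))
    have hk₀ : (k : ℝ) + 1 ≠ 0 := by positivity
    refine (((hcoeff.const_mul (m + 1 : ℝ)).div_const (k + 1 : ℝ)).mul hpow).congr_deriv ?_
    simp only [zero_smul, zero_mul, add_zero]
    field_simp
  · exact Nat.lt_succ_of_le ((natDegree_C_mul_le _ _).trans (natDegree_nodalDeriv_le x v))

theorem eq_zero_of_eval_antideriv_nodalDeriv (hm : 0 < m) {x v : Fin m → ℝ}
    (hx : Function.Injective x) (hv : ∑ j, v j = 0) {c : ℝ}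
    (h : ∀ j, c + (antideriv (C (m + 1 : ℝ) * nodalDeriv x v)).eval (x j) = 0) :
    v = 0 ∧ c = 0 := by
  set R := C c + antideriv (C (m + 1 : ℝ) * nodalDeriv x v) with hR
  have hm₀ : (m + 1 : ℝ) ≠ 0 := by positivity
  have hR₀ : R = 0 := by
    refine eq_zero_of_degree_lt_of_eval_index_eq_zero (s := Finset.univ) hx.injOn ?_
      fun j _ => by simpa [hR] using h j
    have hdeg : (antideriv (C (m + 1 : ℝ) * nodalDeriv x v)).degree < m := by
      have hpred : ((m - 1 : ℕ) : WithBot ℕ) + 1 = m := by exact_mod_cast Nat.sub_add_cancel hm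
      rw [← hpred]
      exact degree_antideriv_lt ((degree_C_mul hm₀).trans_lt (degree_nodalDeriv_lt hm x hv))
    rw [Finset.card_fin]
    exact (degree_add_le _ _).trans_lt
      (max_lt (degree_C_le.trans_lt (by exact_mod_cast hm)) hdeg)
  have hderiv : nodalDeriv x v = 0 := by
    have := congrArg derivative hR₀
    rw [hR, derivative_add, derivative_C, zero_add, derivative_antideriv, derivative_zero,
      mul_eq_zero, C_eq_zero] at this
    exact this.resolve_left hm₀
  constructor
  · funext j
    have heval := eval_nodalDeriv x v (x j)
    rw [hderiv, eval_zero, Finset.sum_eq_single j, eq_comm, mul_eq_zero] at heval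
    · refine neg_eq_zero.1 (heval.resolve_left (Finset.prod_ne_zero_iff.2 fun i hi => ?_))
      exact sub_ne_zero.2 (hx.ne (Finset.ne_of_mem_erase hi).symm)
    · intro i _ hij
      rw [Finset.prod_eq_zero (Finset.mem_erase.2 ⟨hij.symm, Finset.mem_univ j⟩) (sub_self _),
        zero_mul]
    · simp
  · simpa [hR, coeff_antideriv_zero] using congrArg (coeff · 0) hR₀

end MorsePoly

section OrderCone

variable {α : Type*}

/-- The real-valued functions on `α` that are strictly monotone for the relation `r`. -/
def orderCone (r : α → α → Prop) : Set (α → ℝ) :=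
  {y | ∀ a b, r a b → y a < y b}

/-- The real-valued functions on `α` that are weakly monotone for the relation `r`. -/
def closedOrderCone (r : α → α → Prop) : Set (α → ℝ) :=
  {y | ∀ a b, r a b → y a ≤ y b}

variable (r : α → α → Prop)

theorem orderCone_subset_closedOrderCone : orderCone r ⊆ closedOrderCone r :=
  fun _ hy a b hab => (hy a b hab).le

theorem isOpen_orderCone [Finite α] : IsOpen (orderCone r) := by
  simp only [orderCone, Set.ofPred_forall]
  exact isOpen_iInter_of_finite fun a => isOpen_iInter_of_finite fun b =>
    isOpen_iInter_of_finite fun _ => isOpen_lt (continuous_apply a) (continuous_apply b)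

theorem isClosed_closedOrderCone : IsClosed (closedOrderCone r) := by
  simp only [closedOrderCone, Set.ofPred_forall]
  exact isClosed_iInter fun a => isClosed_iInter fun b => isClosed_iInter fun _ =>
    isClosed_le (continuous_apply a) (continuous_apply b)

theorem convex_orderCone : Convex ℝ (orderCone r) := by
  intro y hy z hz s t hs ht hst a b hab
  have hyab := hy a b hab
  have hzab := hz a b hab
  simp only [Pi.add_apply, Pi.smul_apply, smul_eq_mul]
  rcases hs.eq_or_lt with rfl | hs
  · obtain rfl : t = 1 := by linarith
    linarith
  · nlinarith [mul_pos hs (sub_pos.2 hyab), mul_nonneg ht (sub_pos.2 hzab).le]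

theorem orderCone_nonempty [Finite α] [IsStrictOrder α r] :
    (orderCone r).Nonempty := by
  refine ⟨fun a => ({b | r b a} : Set α).ncard, fun a b hab => Nat.cast_lt.2 ?_⟩
  exact Set.ncard_lt_ncard ⟨fun c hca => _root_.trans hca hab,
    fun hsub => irrefl_of r a (hsub hab)⟩

variable {r}

theorem lt_iff_of_mem_orderCone [IsStrictTotalOrder α r]
    {v : α → ℝ} (hv : v ∈ orderCone r) {a b : α} : v a < v b ↔ r a b := by
  refine ⟨fun h => ?_, hv a b⟩
  rcases trichotomous_of r a b with hab | rfl | hab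
  · exact hab
  · exact (lt_irrefl _ h).elim
  · exact (lt_asymm h (hv _ _ hab)).elim

theorem injective_of_mem_orderCone [IsStrictTotalOrder α r]
    {v : α → ℝ} (hv : v ∈ orderCone r) : Function.Injective v := by
  intro a b hab
  rcases trichotomous_of r a b with h | h | h
  · exact ((hv _ _ h).ne hab).elim
  · exact h
  · exact ((hv _ _ h).ne hab.symm).elim

end OrderCone

section Branch

variable {m l : ℕ}

/-- The `k`-th closed interval cut out by the points `x`, counted from the right: the points to the
left of the first `k` members of `x` and to the right of the other ones. -/
def closedBranch (x : Fin m → ℝ) (k : Fin (m + 1)) : Set ℝ :=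
  {t | ∀ j : Fin m, (j.castSucc < k → t ≤ x j) ∧ (k ≤ j.castSucc → x j ≤ t)}

theorem ordConnected_closedBranch (x : Fin m → ℝ) (k : Fin (m + 1)) :
    (closedBranch x k).OrdConnected :=
  ⟨fun _ ha _ hb _ ht j => ⟨fun h => ht.2.trans ((hb j).1 h), fun h => ((ha j).2 h).trans ht.1⟩⟩

theorem neg_one_pow_mul_eval_nodal {x : Fin m → ℝ} {k : Fin (m + 1)} {t : ℝ}
    (ht : t ∈ closedBranch x k) :
    (-1) ^ (k : ℕ) * (Lagrange.nodal Finset.univ x).eval t = ∏ j, |t - x j| := by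
  have hsign : (-1 : ℝ) ^ (k : ℕ) = ∏ j : Fin m, if (j : ℕ) < k then (-1 : ℝ) else 1 := by
    rw [Finset.prod_ite, Finset.prod_const, Finset.prod_const_one, mul_one,
      Fin.card_filter_val_lt, min_eq_right k.is_le]
  rw [hsign, Lagrange.eval_nodal, ← Finset.prod_mul_distrib]
  refine Finset.prod_congr rfl fun j _ => ?_
  split_ifs with h
  · rw [abs_of_nonpos (sub_nonpos.2 ((ht j).1 h)), neg_one_mul]
  · rw [abs_of_nonneg (sub_nonneg.2 ((ht j).2 (not_lt.1 h))), one_mul]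

theorem hasDerivAt_neg_one_pow_mul_morsePoly {x : Fin m → ℝ} {k : Fin (m + 1)} {t : ℝ}
    (ht : t ∈ closedBranch x k) :
    HasDerivAt (fun t => (-1) ^ (k : ℕ) * (morsePoly x).eval t)
      ((m + 1) * ∏ j, |t - x j|) t := by
  refine (((morsePoly x).hasDerivAt t).const_mul ((-1 : ℝ) ^ (k : ℕ))).congr_deriv ?_
  rw [derivative_morsePoly, eval_mul, eval_C, ← neg_one_pow_mul_eval_nodal ht, mul_left_comm]

theorem monotoneOn_closedBranch (x : Fin m → ℝ) (k : Fin (m + 1)) :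
    MonotoneOn (fun t => (-1) ^ (k : ℕ) * (morsePoly x).eval t) (closedBranch x k) := by
  refine monotoneOn_of_hasDerivWithinAt_nonneg (ordConnected_closedBranch x k).convex
    (by fun_prop) (fun t ht => (hasDerivAt_neg_one_pow_mul_morsePoly
      (interior_subset ht)).hasDerivWithinAt) fun t _ => by positivity

/-- The middle third of `[a, b]` stays at distance `(b - a) / 3` from all the critical points, which
bounds the slope there from below. -/
theorem pow_le_neg_one_pow_mul_sub {x : Fin m → ℝ} {k : Fin (m + 1)} {a b : ℝ} (hab : a ≤ b)
    (ha : a ∈ closedBranch x k) (hb : b ∈ closedBranch x k) :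
    (m + 1) * ((b - a) / 3) ^ (m + 1) ≤
      (-1) ^ (k : ℕ) * ((morsePoly x).eval b - (morsePoly x).eval a) := by
  set f : ℝ → ℝ := fun t => (-1) ^ (k : ℕ) * (morsePoly x).eval t
  set h := (b - a) / 3 with hh
  have hh₀ : 0 ≤ h := by linarith
  have hbranch {t : ℝ} (ht : t ∈ Set.Icc a b) : t ∈ closedBranch x k :=
    (ordConnected_closedBranch x k).out ha hb ht
  have hslope {t : ℝ} (ht : t ∈ Set.Icc (a + h) (a + 2 * h)) :
      (m + 1) * h ^ m ≤ (m + 1) * ∏ j, |t - x j| := by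
    gcongr
    rw [← Fin.prod_const]
    refine Finset.prod_le_prod (fun _ _ => hh₀) fun j _ => le_abs'.2 ?_
    rcases lt_or_ge j.castSucc k with hj | hj
    · exact .inl (by linarith [(hb j).1 hj, ht.2])
    · exact .inr (by linarith [(ha j).2 hj, ht.1])
  have hmono := monotoneOn_closedBranch x k
  calc (m + 1) * h ^ (m + 1) = (m + 1) * h ^ m * (a + 2 * h - (a + h)) := by ring
    _ ≤ f (a + 2 * h) - f (a + h) := by
      refine (convex_Icc (a + h) (a + 2 * h)).mul_sub_le_image_sub_of_le_deriv (by fun_prop)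
        (by fun_prop) (fun t ht => ?_) _ ⟨le_rfl, by linarith⟩ _ ⟨by linarith, le_rfl⟩ (by linarith)
      have ht' := interior_subset ht
      rw [(hasDerivAt_neg_one_pow_mul_morsePoly
        (hbranch ⟨by linarith [ht'.1], by linarith [ht'.2]⟩)).deriv]
      exact hslope ht'
    _ ≤ f b - f a := sub_le_sub
      (hmono (hbranch ⟨by linarith, by linarith⟩) hb (by linarith))
      (hmono ha (hbranch ⟨by linarith, by linarith⟩) (by linarith))
    _ = _ := by simp only [f, mul_sub]

end Branch

section Position

variable {m l : ℕ}

/-- The place of a marked point on the line, counted from the right: the critical points occupy the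
odd slots, and the boundary points of the `k`-th branch share the slot `2 * k`. -/
def slot (β : Fin l → Fin (m + 1)) : Fin m ⊕ Fin l → ℕ
  | .inl j => 2 * j + 1
  | .inr i => 2 * β i

/-- `IsLeftOf β a b` says that the slot of `a` lies to the left of the slot of `b`. -/
def IsLeftOf (β : Fin l → Fin (m + 1)) (a b : Fin m ⊕ Fin l) : Prop :=
  slot β b < slot β a

/-- The critical values and boundary values of the monic polynomial with critical points
`y ∘ Sum.inl`, boundary points `y ∘ Sum.inr` and constant term `0`. -/
noncomputable def markedValues (y : Fin m ⊕ Fin l → ℝ) (a : Fin m ⊕ Fin l) : ℝ :=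
  (morsePoly (y ∘ Sum.inl)).eval (y a)

theorem contDiff_markedValues (a : Fin m ⊕ Fin l) :
    ContDiff ℝ 1 fun y : Fin m ⊕ Fin l → ℝ => markedValues y a :=
  contDiff_eval_morsePoly.comp
    (f := fun y : Fin m ⊕ Fin l → ℝ => (y ∘ Sum.inl, y a)) (by fun_prop)

variable {β : Fin l → Fin (m + 1)} {k : Fin (m + 1)} {a b : Fin m ⊕ Fin l}

theorem touches_inl_castSucc (j : Fin m) : Touches β j.castSucc (.inl j) :=
  Or.inl rfl

theorem touches_inl_succ (j : Fin m) : Touches β j.succ (.inl j) :=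
  Or.inr rfl

theorem touches_inr (i : Fin l) : Touches β (β i) (.inr i) :=
  rfl

theorem morseSign_lt_iff (ha : Touches β k a) (hb : Touches β k b) :
    morseSign a < morseSign b ↔ if Even (k : ℕ) then IsLeftOf β a b else IsLeftOf β b a := by
  rcases a with i | i <;> rcases b with j | j <;>
    simp only [Touches, morseSign, IsLeftOf, slot, Fin.ext_iff, Fin.val_castSucc, Fin.val_succ]
      at ha hb ⊢ <;> grind

theorem forced_or_forced (ha : Touches β k a) (hb : Touches β k b) (hab : IsLeftOf β a b) :
    Forced β a b ∨ Forced β b a := by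
  by_cases hk : Even (k : ℕ)
  · exact .inl ⟨⟨k, ha, hb⟩, (morseSign_lt_iff ha hb).2 (by rwa [if_pos hk])⟩
  · exact .inr ⟨⟨k, hb, ha⟩, (morseSign_lt_iff hb ha).2 (by rwa [if_neg hk])⟩

theorem isLeftOf_or_isLeftOf (j : Fin m) (ha : a ≠ .inl j) :
    IsLeftOf β a (.inl j) ∨ IsLeftOf β (.inl j) a := by
  rcases a with i | i <;> simp only [IsLeftOf, slot, ne_eq, Sum.inl.injEq, Fin.ext_iff] at ha ⊢ <;>
    omega

theorem exists_touches_between (hab : IsLeftOf β a b) :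
    ∃ c d k, Touches β k c ∧ Touches β k d ∧ IsLeftOf β c d ∧
      (c = a ∨ IsLeftOf β a c) ∧ (d = b ∨ IsLeftOf β d b) := by
  rcases b with j | t
  · rcases a with i | s
    · simp only [IsLeftOf, slot] at hab
      refine ⟨.inl ⟨j + 1, by omega⟩, .inl j, j.succ, ?_⟩
      simp only [IsLeftOf, slot, Touches, Sum.inl.injEq, Fin.ext_iff, Fin.val_castSucc,
        Fin.val_succ]
      grind
    · simp only [IsLeftOf, slot] at hab
      refine ⟨.inr s, .inl ⟨β s - 1, by omega⟩, β s, ?_⟩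
      simp only [IsLeftOf, slot, Touches, Sum.inl.injEq, Fin.ext_iff, Fin.val_castSucc,
        Fin.val_succ]
      grind
  · have hlt : (β t : ℕ) < m := by
      rcases a with i | s <;> simp only [IsLeftOf, slot] at hab <;> omega
    refine ⟨.inl ⟨β t, hlt⟩, .inr t, β t, ?_⟩
    rcases a with i | s <;> simp only [IsLeftOf, slot] at hab <;>
      simp only [IsLeftOf, slot, Touches, Sum.inl.injEq, Fin.ext_iff, Fin.val_castSucc,
        Fin.val_succ, reduceCtorEq] <;> grind

theorem mem_closedBranch {y : Fin m ⊕ Fin l → ℝ} (hy : y ∈ closedOrderCone (IsLeftOf β))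
    (ha : Touches β k a) : y a ∈ closedBranch (y ∘ Sum.inl) k := by
  intro j
  by_cases haj : a = .inl j
  · subst haj
    exact ⟨fun _ => le_rfl, fun _ => le_rfl⟩
  · refine ⟨fun h => hy _ _ ?_, fun h => hy _ _ ?_⟩ <;>
      rcases a with i | i <;>
      simp only [Touches, IsLeftOf, slot, Fin.ext_iff, Fin.lt_def, Fin.le_def, Fin.val_castSucc,
        Fin.val_succ, Sum.inl.injEq] at ha haj h ⊢ <;> omega

theorem pow_le_sub_of_forced {y : Fin m ⊕ Fin l → ℝ} (hy : y ∈ closedOrderCone (IsLeftOf β))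
    (h : Forced β a b) :
    (m + 1) * (|y a - y b| / 3) ^ (m + 1) ≤ markedValues y b - markedValues y a := by
  obtain ⟨⟨k, ha, hb⟩, hsign⟩ := h
  rw [morseSign_lt_iff ha hb] at hsign
  have hya := mem_closedBranch hy ha
  have hyb := mem_closedBranch hy hb
  split_ifs at hsign with hk
  · have hab := hy a b hsign
    simpa [markedValues, hk.neg_one_pow, abs_sub_comm (y a), abs_of_nonneg (sub_nonneg.2 hab)] using
      pow_le_neg_one_pow_mul_sub hab hya hyb
  · have hba := hy b a hsign
    simpa [markedValues, (Nat.not_even_iff_odd.1 hk).neg_one_pow,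
      abs_of_nonneg (sub_nonneg.2 hba)] using pow_le_neg_one_pow_mul_sub hba hyb hya

end Position

section ValueMap

variable {m l : ℕ}

/-- The map taking a configuration of critical points and boundary points, together with a constant
term, to the critical and boundary values, together with the sum of the critical points. Fixing that
sum at `0` removes the translations. -/
noncomputable def valueMap (z : (Fin m ⊕ Fin l → ℝ) × ℝ) : (Fin m ⊕ Fin l → ℝ) × ℝ :=
  (fun a => z.2 + markedValues z.1 a, ∑ j, z.1 (.inl j))

theorem contDiff_valueMap : ContDiff ℝ 1 (valueMap (m := m) (l := l)) :=
  ContDiff.prodMk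
    (contDiff_pi.2 fun a => contDiff_snd.add ((contDiff_markedValues a).comp contDiff_fst))
    (ContDiff.sum fun _ _ => (contDiff_apply ℝ ℝ _).comp contDiff_fst)

theorem fderiv_valueMap_apply (z v : (Fin m ⊕ Fin l → ℝ) × ℝ) :
    fderiv ℝ valueMap z v =
      (fun a => v.2 +
        ((antideriv (C (m + 1 : ℝ) * nodalDeriv (z.1 ∘ Sum.inl) (v.1 ∘ Sum.inl))).eval (z.1 a) +
          (m + 1) * (Lagrange.nodal Finset.univ (z.1 ∘ Sum.inl)).eval (z.1 a) * v.1 a),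
      ∑ j, v.1 (.inl j)) := by
  have hline : HasDerivAt (fun e : ℝ => valueMap (z + e • v)) (fderiv ℝ valueMap z v) 0 :=
    (contDiff_valueMap.differentiable one_ne_zero z).hasFDerivAt.hasLineDerivAt v
  refine hline.unique (HasDerivAt.prodMk (hasDerivAt_pi.2 fun a => ?_) ?_)
  · have hconst : HasDerivAt (fun e : ℝ => z.2 + e * v.2) v.2 0 := by
      simpa using ((hasDerivAt_id (0 : ℝ)).mul_const v.2).const_add z.2
    exact hconst.add (hasDerivAt_eval_morsePoly (z.1 ∘ Sum.inl) (v.1 ∘ Sum.inl) (z.1 a) (v.1 a))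
  · refine HasDerivAt.fun_sum fun j _ => ?_
    simpa using ((hasDerivAt_id (0 : ℝ)).mul_const (v.1 (.inl j))).const_add (z.1 (.inl j))

theorem injective_fderiv_valueMap (hm : 0 < m) {z : (Fin m ⊕ Fin l → ℝ) × ℝ}
    (hz : ∀ j a, a ≠ Sum.inl j → z.1 a ≠ z.1 (.inl j)) :
    Function.Injective (fderiv ℝ valueMap z) := by
  refine (injective_iff_map_eq_zero _).2 fun v hv => ?_
  rw [fderiv_valueMap_apply, Prod.mk_eq_zero, funext_iff] at hv
  obtain ⟨hvalues, hsum⟩ := hv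
  have hcrit (j : Fin m) :
      (Lagrange.nodal Finset.univ (z.1 ∘ Sum.inl)).eval (z.1 (.inl j)) = 0 :=
    Lagrange.eval_nodal_at_node (v := z.1 ∘ Sum.inl) (Finset.mem_univ j)
  obtain ⟨hinl, hconst⟩ := eq_zero_of_eval_antideriv_nodalDeriv
    (x := z.1 ∘ Sum.inl) (v := v.1 ∘ Sum.inl) hm
    (fun i j hij => not_imp_not.1 (fun h => hz j (.inl i) (by simpa using h)) hij) hsum
    fun j => by simpa [hcrit] using hvalues (.inl j)
  refine Prod.ext (funext fun a => ?_) hconst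
  rcases a with j | i
  · exact congrFun hinl j
  · have hvalue := hvalues (.inr i)
    simp only [hconst, hinl, nodalDeriv_zero, mul_zero, antideriv_zero, eval_zero, zero_add,
      Pi.zero_apply, mul_eq_zero] at hvalue
    exact hvalue.resolve_left (not_or.2 ⟨by positivity, Lagrange.eval_nodal_not_at_node
      fun j _ => hz j (.inr i) Sum.inr_ne_inl⟩)

variable {β : Fin l → Fin (m + 1)}

theorem injective_fderiv_valueMap_of_mem (hm : 0 < m) {z : (Fin m ⊕ Fin l → ℝ) × ℝ}
    (hz : z.1 ∈ orderCone (IsLeftOf β)) : Function.Injective (fderiv ℝ valueMap z) :=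
  injective_fderiv_valueMap hm fun j _ haj =>
    (isLeftOf_or_isLeftOf j haj).elim (fun h => (hz _ _ h).ne) fun h => (hz _ _ h).ne'

theorem mapsTo_valueMap :
    Set.MapsTo valueMap (orderCone (IsLeftOf β) ×ˢ Set.univ)
      (orderCone (Forced β) ×ˢ (Set.univ : Set ℝ)) := by
  refine fun z hz => ⟨fun a b hab => ?_, trivial⟩
  have hgap := pow_le_sub_of_forced (orderCone_subset_closedOrderCone _ hz.1) hab
  have hne : z.1 a ≠ z.1 b := by
    obtain ⟨⟨k, ha, hb⟩, hsign⟩ := hab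
    rw [morseSign_lt_iff ha hb] at hsign
    split_ifs at hsign
    · exact (hz.1 _ _ hsign).ne
    · exact (hz.1 _ _ hsign).ne'
  have : 0 < |z.1 a - z.1 b| := abs_pos.2 (sub_ne_zero.2 hne)
  simp only [valueMap, add_lt_add_iff_left]
  exact sub_pos.1 (hgap.trans_lt' (by positivity))

theorem mem_orderCone_of_valueMap_mem {z : (Fin m ⊕ Fin l → ℝ) × ℝ}
    (hz : z.1 ∈ closedOrderCone (IsLeftOf β)) (hvalue : (valueMap z).1 ∈ orderCone (Forced β)) :
    z.1 ∈ orderCone (IsLeftOf β) := by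
  have hle {a b} (h : b = a ∨ IsLeftOf β a b) : z.1 a ≤ z.1 b := by
    rcases h with rfl | h
    exacts [le_rfl, hz _ _ h]
  intro a b hab
  refine (hz a b hab).lt_of_ne fun heq => ?_
  obtain ⟨c, d, k, hc, hd, hcd, hac, hdb⟩ := exists_touches_between hab
  have hcd' : z.1 c = z.1 d :=
    (hz c d hcd).antisymm ((hle (hdb.imp_left Eq.symm)).trans (heq.symm.le.trans (hle hac)))
  rcases forced_or_forced hc hd hcd with h | h <;>
    simpa [valueMap, markedValues, hcd'] using hvalue _ _ h

end ValueMap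

section Properness

variable {m l : ℕ} {β : Fin l → Fin (m + 1)}

theorem abs_sub_le_of_forced {y : Fin m ⊕ Fin l → ℝ} (hy : y ∈ closedOrderCone (IsLeftOf β))
    {a b : Fin m ⊕ Fin l} (h : Forced β a b) {B : ℝ}
    (hB : markedValues y b - markedValues y a ≤ B) :
    |y a - y b| ≤ 3 * (1 + B) := by
  have hgap := (pow_le_sub_of_forced hy h).trans hB
  by_contra! hlt
  have hB₀ : 0 ≤ B := hgap.trans' (by positivity)
  have hone : 1 ≤ |y a - y b| / 3 := by linarith
  have hpow := le_self_pow₀ hone m.add_one_ne_zero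
  have hmul := le_mul_of_one_le_left (a := (m + 1 : ℝ))
    (show 0 ≤ (|y a - y b| / 3) ^ (m + 1) by positivity) (by simp)
  linarith

theorem abs_sub_le_of_touches {y : Fin m ⊕ Fin l → ℝ} (hy : y ∈ closedOrderCone (IsLeftOf β))
    {k : Fin (m + 1)} {a b : Fin m ⊕ Fin l} (ha : Touches β k a) (hb : Touches β k b)
    (hab : IsLeftOf β a b) {B : ℝ}
    (hB : ∀ a b, markedValues y b - markedValues y a ≤ B) :
    |y a - y b| ≤ 3 * (1 + B) := by
  rcases forced_or_forced ha hb hab with h | h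
  · exact abs_sub_le_of_forced hy h (hB a b)
  · rw [abs_sub_comm]
    exact abs_sub_le_of_forced hy h (hB b a)

theorem exists_abs_sub_inl_le (hm : 0 < m) {y : Fin m ⊕ Fin l → ℝ}
    (hy : y ∈ closedOrderCone (IsLeftOf β)) {B : ℝ} (a : Fin m ⊕ Fin l)
    (hB : ∀ a b, markedValues y b - markedValues y a ≤ B) :
    ∃ j, |y a - y (.inl j)| ≤ 3 * (1 + B) := by
  rcases a with j | i
  · refine ⟨j, ?_⟩
    have := hB (.inl j) (.inl j)
    rw [sub_self, abs_zero]
    linarith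
  · rcases lt_or_ge (β i : ℕ) m with hlt | hge
    · refine ⟨⟨β i, hlt⟩, ?_⟩
      rw [abs_sub_comm]
      exact abs_sub_le_of_touches hy (touches_inl_castSucc ⟨β i, hlt⟩) (touches_inr i)
        (Nat.lt_succ_self _) hB
    · have hlast : (⟨m - 1, by omega⟩ : Fin m).succ = β i := by
        simp only [Fin.ext_iff, Fin.val_succ]
        omega
      refine ⟨⟨m - 1, by omega⟩, abs_sub_le_of_touches hy (touches_inr i)
        (hlast ▸ touches_inl_succ _) ?_ hB⟩
      simp only [IsLeftOf, slot]
      omega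

theorem abs_sub_inl_zero_le {y : Fin m ⊕ Fin l → ℝ}
    (hy : y ∈ closedOrderCone (IsLeftOf β)) {B : ℝ}
    (hB : ∀ a b, markedValues y b - markedValues y a ≤ B)
    (j : ℕ) (hj : j < m) :
    |y (.inl ⟨j, hj⟩) - y (.inl ⟨0, j.zero_le.trans_lt hj⟩)| ≤ j * (3 * (1 + B)) := by
  induction j with
  | zero => simp
  | succ j ih =>
    have hstep : |y (.inl ⟨j + 1, hj⟩) - y (.inl ⟨j, j.lt_succ_self.trans hj⟩)| ≤ 3 * (1 + B) :=
      abs_sub_le_of_touches hy (touches_inl_castSucc ⟨j + 1, hj⟩) (touches_inl_succ ⟨j, _⟩)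
        (by simp only [IsLeftOf, slot]; omega) hB
    calc _ ≤ _ := abs_sub_le _ _ _
      _ ≤ _ := add_le_add hstep (ih (j.lt_succ_self.trans hj))
      _ = _ := by push_cast; ring

theorem abs_le_of_sum_of_values (hm : 0 < m) {y : Fin m ⊕ Fin l → ℝ}
    (hy : y ∈ closedOrderCone (IsLeftOf β)) {B : ℝ}
    (hB : ∀ a b, markedValues y b - markedValues y a ≤ B)
    (a : Fin m ⊕ Fin l) :
    |y a| ≤ |∑ j, y (.inl j)| + (2 * m + 1) * (3 * (1 + B)) := by
  have hH : 0 ≤ 3 * (1 + B) := by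
    have := hB a a
    linarith
  have hm₁ : (1 : ℝ) ≤ m := by exact_mod_cast hm
  have hzero (j : Fin m) : |y (.inl j) - y (.inl ⟨0, hm⟩)| ≤ m * (3 * (1 + B)) :=
    (abs_sub_inl_zero_le hy hB j j.2).trans (by gcongr; exact j.2.le)
  obtain ⟨i, hi⟩ := exists_abs_sub_inl_le hm hy a hB
  have hdist (j : Fin m) : |y a - y (.inl j)| ≤ (2 * m + 1) * (3 * (1 + B)) := by
    have h₁ := abs_sub_le (y a) (y (.inl i)) (y (.inl j))
    have h₂ := abs_sub_le (y (.inl i)) (y (.inl ⟨0, hm⟩)) (y (.inl j))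
    have h₃ := hzero j
    rw [abs_sub_comm] at h₃
    linarith [hzero i]
  refine le_of_mul_le_mul_left (a := (m : ℝ)) ?_ (by linarith)
  calc m * |y a| = |∑ j, y (.inl j) + ∑ j : Fin m, (y a - y (.inl j))| := by
        rw [← Finset.sum_add_distrib]
        simp [abs_mul]
    _ ≤ |∑ j, y (.inl j)| + ∑ j : Fin m, |y a - y (.inl j)| :=
        (abs_add_le _ _).trans (by gcongr; exact Finset.abs_sum_le_sum_abs _ _)
    _ ≤ m * |∑ j, y (.inl j)| + ∑ _j : Fin m, (2 * m + 1) * (3 * (1 + B)) := by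
        gcongr with j
        · exact le_mul_of_one_le_left (abs_nonneg _) hm₁
        · exact hdist j
    _ = _ := by simp [mul_add]

theorem isBounded_preimage_valueMap (hm : 0 < m) {K : Set ((Fin m ⊕ Fin l → ℝ) × ℝ)}
    (hK : Bornology.IsBounded K) :
    Bornology.IsBounded
      (Prod.fst '' (Prod.fst ⁻¹' closedOrderCone (IsLeftOf β) ∩ valueMap ⁻¹' K)) := by
  obtain ⟨B, hB⟩ := isBounded_iff_forall_norm_le.1 hK
  refine isBounded_iff_forall_norm_le.2 ⟨B + (2 * m + 1) * (3 * (1 + (B + B))), ?_⟩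
  rintro _ ⟨z, ⟨hz, hzK⟩, rfl⟩
  obtain ⟨hvalues, hsum⟩ := max_le_iff.1 (hB _ hzK)
  have hvalue (a) : |z.2 + markedValues z.1 a| ≤ B :=
    (norm_le_pi_norm _ a).trans hvalues
  have hB₀ : 0 ≤ B := (abs_nonneg _).trans hsum
  refine (pi_norm_le_iff_of_nonneg (by positivity)).2 fun a => ?_
  refine (abs_le_of_sum_of_values hm hz (fun a b => ?_) a).trans (add_le_add_left hsum _)
  linarith [(abs_le.1 (hvalue a)).1, (abs_le.1 (hvalue b)).2]

theorem isCompact_inter_preimage_valueMap (hm : 0 < m) {K : Set ((Fin m ⊕ Fin l → ℝ) × ℝ)}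
    (hK : IsCompact K) (hKW : K ⊆ orderCone (Forced β) ×ˢ Set.univ) :
    IsCompact (orderCone (IsLeftOf β) ×ˢ Set.univ ∩ valueMap ⁻¹' K) := by
  set S := Prod.fst ⁻¹' closedOrderCone (IsLeftOf β) ∩ valueMap ⁻¹' K
  have heq : orderCone (IsLeftOf β) ×ˢ Set.univ ∩ valueMap ⁻¹' K = S := by
    ext z
    exact ⟨fun hz => ⟨orderCone_subset_closedOrderCone _ hz.1.1, hz.2⟩,
      fun hz => ⟨⟨mem_orderCone_of_valueMap_mem hz.1 (hKW hz.2).1, trivial⟩, hz.2⟩⟩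
  have hclosed : IsClosed S :=
    ((isClosed_closedOrderCone _).preimage continuous_fst).inter
      (hK.isClosed.preimage contDiff_valueMap.continuous)
  let j₀ : Fin m ⊕ Fin l := .inl ⟨0, hm⟩
  let f (p : (Fin m ⊕ Fin l → ℝ) × ((Fin m ⊕ Fin l → ℝ) × ℝ)) : (Fin m ⊕ Fin l → ℝ) × ℝ :=
    (p.1, p.2.1 j₀ - markedValues p.1 j₀)
  have hf : Continuous f := continuous_fst.prodMk (Continuous.sub (by fun_prop)
    ((contDiff_markedValues j₀).continuous.comp continuous_fst))
  rw [heq]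
  refine (((isBounded_preimage_valueMap (β := β) hm hK.isBounded).isCompact_closure.prod
    hK).image hf).of_isClosed_subset hclosed fun z hz => ?_
  exact ⟨(z.1, valueMap z), ⟨subset_closure ⟨z, hz, rfl⟩, hz.2⟩,
    Prod.ext rfl (add_sub_cancel_right _ _)⟩

end Properness

section Unfolding

/-- The polynomial `x ^ n + λ₂ x ^ (n - 2) + ⋯ + λₙ₋₁ x` with coefficients `u = (λ₂, …, λₙ₋₁)`. -/
noncomputable def unfolding (n : ℕ) (u : Fin (n - 2) → ℝ) : ℝ[X] :=
  X ^ n + ∑ j : Fin (n - 2), C (u j) * X ^ (n - 2 - (j : ℕ))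

variable {n : ℕ}

theorem coeff_unfolding (u : Fin (n - 2) → ℝ) (k : ℕ) : (unfolding n u).coeff k =
    (if k = n then 1 else 0) + ∑ j : Fin (n - 2), if k = n - 2 - (j : ℕ) then u j else 0 := by
  simp [unfolding, coeff_X_pow]

theorem continuous_coeff_unfolding (k : ℕ) :
    Continuous fun u : Fin (n - 2) → ℝ => (unfolding n u).coeff k := by
  simp only [coeff_unfolding]
  refine continuous_const.add (continuous_finsetSum _ fun j _ => ?_)
  split_ifs <;> fun_prop

theorem coeff_unfolding_zero (hn : n ≠ 0) (u : Fin (n - 2) → ℝ) :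
    (unfolding n u).coeff 0 = 0 := by
  rw [coeff_unfolding, if_neg hn.symm, zero_add]
  exact Finset.sum_eq_zero fun j _ => if_neg (by omega)

theorem coeff_unfolding_self (hn : 2 ≤ n) (u : Fin (n - 2) → ℝ) :
    (unfolding n u).coeff n = 1 := by
  rw [coeff_unfolding, if_pos rfl, add_eq_left]
  exact Finset.sum_eq_zero fun j _ => if_neg (by omega)

theorem coeff_unfolding_pred (hn : 2 ≤ n) (u : Fin (n - 2) → ℝ) :
    (unfolding n u).coeff (n - 1) = 0 := by
  rw [coeff_unfolding, if_neg (by omega), zero_add]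
  exact Finset.sum_eq_zero fun j _ => if_neg (by omega)

theorem coeff_unfolding_sub (u : Fin (n - 2) → ℝ) (j : Fin (n - 2)) :
    (unfolding n u).coeff (n - 2 - j) = u j := by
  rw [coeff_unfolding, if_neg (by omega), zero_add, Finset.sum_eq_single j, if_pos rfl]
  · exact fun i _ hij => if_neg fun h => hij (Fin.ext (by omega))
  · simp

theorem natDegree_unfolding_le (u : Fin (n - 2) → ℝ) : (unfolding n u).natDegree ≤ n := by
  refine natDegree_le_iff_coeff_eq_zero.2 fun k hk => ?_
  rw [coeff_unfolding, if_neg (by omega), zero_add]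
  exact Finset.sum_eq_zero fun j _ => if_neg (by omega)

theorem natDegree_unfolding (hn : 2 ≤ n) (u : Fin (n - 2) → ℝ) : (unfolding n u).natDegree = n :=
  natDegree_eq_of_le_of_coeff_ne_zero (natDegree_unfolding_le u)
    (by simp [coeff_unfolding_self hn])

theorem monic_unfolding (hn : 2 ≤ n) (u : Fin (n - 2) → ℝ) : (unfolding n u).Monic :=
  monic_of_natDegree_le_of_coeff_eq_one n (natDegree_unfolding_le u) (coeff_unfolding_self hn u)

theorem eq_unfolding_iff (hn : 2 ≤ n) {p : ℝ[X]} (hp : p.Monic) (hdeg : p.natDegree = n)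
    (hzero : p.coeff 0 = 0) {u : Fin (n - 2) → ℝ} :
    p = unfolding n u ↔ ∀ k < n - 1, p.coeff (k + 1) = (unfolding n u).coeff (k + 1) := by
  refine ⟨fun h k _ => h ▸ rfl, fun h => ext fun k => ?_⟩
  rcases k with _ | k
  · rw [hzero, coeff_unfolding_zero (by omega)]
  · rcases lt_trichotomy (k + 1) n with hk | rfl | hk
    · exact h k (by omega)
    · rw [coeff_unfolding_self hn, ← hdeg, hp.coeff_natDegree]
    · rw [coeff_eq_zero_of_natDegree_lt (hdeg.trans_lt hk),
        coeff_eq_zero_of_natDegree_lt ((natDegree_unfolding hn u).trans_lt hk)]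

theorem eq_unfolding (hn : 2 ≤ n) {p : ℝ[X]} (hp : p.Monic) (hdeg : p.natDegree = n)
    (hzero : p.coeff 0 = 0) (hpred : p.coeff (n - 1) = 0) :
    p = unfolding n fun j => p.coeff (n - 2 - j) := by
  refine (eq_unfolding_iff hn hp hdeg hzero).2 fun k hk => ?_
  rcases lt_or_ge k (n - 2) with hk' | hk'
  · have hidx : n - 2 - (n - 2 - (k + 1)) = k + 1 := by omega
    have := coeff_unfolding_sub (fun j : Fin (n - 2) => p.coeff (n - 2 - j))
      ⟨n - 2 - (k + 1), by omega⟩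
    simpa only [hidx] using this.symm
  · have hidx : k + 1 = n - 1 := by omega
    rw [hidx, coeff_unfolding_pred hn, hpred]

end Unfolding

section MorsePoly

variable {m : ℕ}

theorem coeff_morsePoly_succ (x : Fin m → ℝ) (k : ℕ) : (morsePoly x).coeff (k + 1) =
    (m + 1) * (Lagrange.nodal Finset.univ x).coeff k / (k + 1) := by
  rw [morsePoly, coeff_antideriv_succ, coeff_C_mul]

theorem coeff_morsePoly_zero (x : Fin m → ℝ) : (morsePoly x).coeff 0 = 0 :=
  coeff_antideriv_zero _

theorem natDegree_morsePoly_le (x : Fin m → ℝ) : (morsePoly x).natDegree ≤ m + 1 := by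
  refine natDegree_le_iff_coeff_eq_zero.2 fun k hk => ?_
  obtain ⟨k, rfl⟩ : ∃ j, k = j + 1 := ⟨k - 1, by omega⟩
  rw [coeff_morsePoly_succ, coeff_eq_zero_of_natDegree_lt (by simpa using hk), mul_zero, zero_div]

theorem coeff_morsePoly_add_one (x : Fin m → ℝ) : (morsePoly x).coeff (m + 1) = 1 := by
  rw [coeff_morsePoly_succ, coeff_nodal_univ, mul_one, div_self (by positivity)]

theorem natDegree_morsePoly (x : Fin m → ℝ) : (morsePoly x).natDegree = m + 1 :=
  natDegree_eq_of_le_of_coeff_ne_zero (natDegree_morsePoly_le x)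
    (by simp [coeff_morsePoly_add_one])

theorem monic_morsePoly (x : Fin m → ℝ) : (morsePoly x).Monic :=
  monic_of_natDegree_le_of_coeff_eq_one _ (natDegree_morsePoly_le x) (coeff_morsePoly_add_one x)

theorem coeff_morsePoly_self (hm : 0 < m) (x : Fin m → ℝ) :
    (morsePoly x).coeff m = -((m + 1) / m * ∑ j, x j) := by
  obtain ⟨k, rfl⟩ : ∃ k, m = k + 1 := ⟨m - 1, by omega⟩
  rw [coeff_morsePoly_succ, show (Lagrange.nodal Finset.univ x).coeff k = _ from
    coeff_pred_nodal_univ hm x]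
  push_cast
  ring

theorem roots_derivative_morsePoly (x : Fin m → ℝ) :
    (derivative (morsePoly x)).roots = Finset.univ.val.map x := by
  rw [derivative_morsePoly, roots_C_mul _ (by positivity)]
  simpa only [Multiset.map_map, Function.comp_def] using!
    roots_multiset_prod_X_sub_C (Finset.univ.val.map x)

theorem morsePoly_injOn_antitone : Set.InjOn (morsePoly (m := m)) {x | Antitone x} := by
  intro x hx x' hx' h
  have hroots : Finset.univ.val.map x = Finset.univ.val.map x' := by
    rw [← roots_derivative_morsePoly, h, roots_derivative_morsePoly]
  rw [Fin.univ_val_map, Fin.univ_val_map, Multiset.coe_eq_coe] at hroots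
  exact List.ofFn_injective (hroots.eq_of_sortedGE hx.sortedGE_ofFn hx'.sortedGE_ofFn)

theorem exists_strictAnti_eq_morsePoly {p : ℝ[X]} (hp : p.Monic) (hdeg : p.natDegree = m + 1)
    (hzero : p.coeff 0 = 0) (hcard : (derivative p).roots.toFinset.card = m) :
    ∃ x : Fin m → ℝ, StrictAnti x ∧ p = morsePoly x := by
  set s := (derivative p).roots.toFinset
  set x : Fin m → ℝ := s.orderEmbOfFin hcard ∘ Fin.rev
  have hx : StrictAnti x := (s.orderEmbOfFin hcard).strictMono.comp_strictAnti Fin.rev_strictAnti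
  have hdeg' : (derivative p).natDegree = m := by
    rw [natDegree_derivative, hdeg, Nat.add_sub_cancel]
  have hlead : (derivative p).leadingCoeff = m + 1 := by
    rw [leadingCoeff, hdeg', coeff_derivative, ← hdeg, hp.coeff_natDegree, one_mul]
  have hroots : (derivative p).roots = Finset.univ.val.map x := by
    refine (Multiset.eq_of_le_of_card_le ?_ ?_).symm
    · refine (Multiset.le_iff_subset (Finset.univ.nodup.map hx.injective)).2 fun t ht => ?_
      obtain ⟨j, -, rfl⟩ := Multiset.mem_map.1 ht
      exact Multiset.mem_toFinset.1 (s.orderEmbOfFin_mem hcard _)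
    · simpa [hdeg'] using card_roots' (derivative p)
  refine ⟨x, hx, eq_antideriv_iff.2 ⟨?_, hzero⟩⟩
  rw [← C_leadingCoeff_mul_prod_multiset_X_sub_C (p := derivative p) (by simp [hroots, hdeg']),
    hlead, hroots, Multiset.map_map]
  rfl

end MorsePoly

section Components

theorem card_connectedComponents_eq_of_partition {X ι : Type*} [TopologicalSpace X] [Finite ι]
    {s : ι → Set X} (hclosed : ∀ i, IsClosed (s i)) (hconn : ∀ i, IsConnected (s i))
    (hdisj : Pairwise (Function.onFun Disjoint s)) (hcover : ∀ x, ∃ i, x ∈ s i) :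
    Nat.card (ConnectedComponents X) = Nat.card ι := by
  have hopen (i : ι) : IsOpen (s i) := by
    have hcompl : (s i)ᶜ = ⋃ j : {j // j ≠ i}, s j := by
      ext x
      obtain ⟨k, hk⟩ := hcover x
      rw [Set.mem_compl_iff, Set.mem_iUnion]
      refine ⟨fun hx => ⟨⟨k, fun h => hx (h ▸ hk)⟩, hk⟩, ?_⟩
      rintro ⟨⟨j, hj⟩, hxj⟩
      exact Set.disjoint_left.1 (hdisj hj) hxj
    rw [← isClosed_compl_iff, hcompl]
    exact isClosed_iUnion_of_finite fun j => hclosed j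
  have hcomponent {i : ι} {x : X} (hx : x ∈ s i) : connectedComponent x = s i :=
    (IsClopen.connectedComponent_subset ⟨hclosed i, hopen i⟩ hx).antisymm
      ((hconn i).isPreconnected.subset_connectedComponent hx)
  choose x hx using fun i => (hconn i).nonempty
  refine (Nat.card_congr (Equiv.ofBijective (fun i => (x i : ConnectedComponents X))
    ⟨fun i j hij => ?_, fun c => ?_⟩)).symm
  · by_contra hne
    have hxi := hx i
    rw [← hcomponent (hx i), ConnectedComponents.coe_eq_coe.1 hij, hcomponent (hx j)] at hxi
    exact Set.disjoint_left.1 (hdisj hne) (hx i) hxi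
  · obtain ⟨p, rfl⟩ := ConnectedComponents.surjective_coe c
    obtain ⟨i, hi⟩ := hcover p
    exact ⟨i, ConnectedComponents.coe_eq_coe'.2 (hcomponent hi ▸ hx i)⟩

end Components

section Realization

variable {m l : ℕ}

/-- `Realizes y q` says that `y` lists the critical points, with multiplicity, and the boundary
points of the multiboundary polynomial with parameters `q`. -/
def Realizes (y : Fin m ⊕ Fin l → ℝ) (q : (Fin (m + 1 - 2) → ℝ) × (Fin l → ℝ)) : Prop :=
  morsePoly (y ∘ Sum.inl) = unfolding (m + 1) q.1 ∧ y ∘ Sum.inr = q.2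

variable {y : Fin m ⊕ Fin l → ℝ} {q : (Fin (m + 1 - 2) → ℝ) × (Fin l → ℝ)}

theorem Realizes.eq_of_antitone {y' : Fin m ⊕ Fin l → ℝ} (h : Realizes y q) (h' : Realizes y' q)
    (hy : Antitone (y ∘ Sum.inl)) (hy' : Antitone (y' ∘ Sum.inl)) : y = y' := by
  rw [← Sum.elim_comp_inl_inr y, ← Sum.elim_comp_inl_inr y', h.2, h'.2,
    morsePoly_injOn_antitone hy hy' (h.1.trans h'.1.symm)]

theorem exists_realizes_of_mem_V (hm : 0 < m) (hq : q ∈ V (m + 1) l) :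
    ∃ y, StrictAnti (y ∘ Sum.inl) ∧ Realizes y q := by
  obtain ⟨x, hx, hpx⟩ := exists_strictAnti_eq_morsePoly (monic_unfolding (by omega) q.1)
    (natDegree_unfolding (by omega) q.1) (coeff_unfolding_zero (by omega) q.1) (hq _ rfl).1
  exact ⟨Sum.elim x q.2, hx, hpx.symm, rfl⟩

theorem Realizes.mem_V_iff (h : Realizes y q) (hy : StrictAnti (y ∘ Sum.inl)) :
    q ∈ V (m + 1) l ↔ Function.Injective (markedValues y) := by
  have hroots : (derivative (unfolding (m + 1) q.1)).roots.toFinset =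
      Finset.univ.image (y ∘ Sum.inl) := by
    rw [← h.1, roots_derivative_morsePoly]
    rfl
  have hV : q ∈ V (m + 1) l ↔ _ := forall_eq (a' := unfolding (m + 1) q.1)
  rw [hV, hroots, Finset.card_image_of_injective _ hy.injective, ← h.1, ← h.2]
  simp only [Finset.card_fin, add_tsub_cancel_right, true_and, Finset.mem_image, Finset.mem_univ,
    forall_exists_index, forall_apply_eq_imp_iff, hy.injective.ne_iff]
  simp only [Function.Injective, Sum.forall, markedValues, Function.comp_apply]
  grind

theorem continuous_coeff_morsePoly (k : ℕ) :
    Continuous fun x : Fin m → ℝ => (morsePoly x).coeff k := by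
  rcases k with _ | k
  · simpa only [coeff_morsePoly_zero] using continuous_const
  · simp only [coeff_morsePoly_succ]
    exact ((contDiff_coeff_nodal Finset.univ k).continuous.const_mul _).div_const _

theorem norm_le_norm_coeff_morsePoly_add_one (x : Fin m → ℝ) :
    ‖x‖ ≤ ‖fun k : Fin m => (morsePoly x).coeff (k + 1)‖ + 1 := by
  refine (pi_norm_le_iff_of_nonneg (by positivity)).2 fun j => ?_
  have hroot : (Lagrange.nodal Finset.univ x).IsRoot (x j) :=
    Lagrange.eval_nodal_at_node (Finset.mem_univ j)
  have hbound := hroot.norm_lt_cauchyBound Lagrange.nodal_ne_zero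
  rw [cauchyBound, Lagrange.nodal_monic.leadingCoeff, nnnorm_one, div_one,
    Lagrange.natDegree_nodal, Finset.card_fin] at hbound
  refine hbound.le.trans (add_le_add_left (Finset.sup_le fun k hk => ?_) 1)
  have hk := Finset.mem_range.1 hk
  refine le_trans ?_ (nnnorm_le_pi_nnnorm _ ⟨k, hk⟩)
  rw [← NNReal.coe_le_coe, coe_nnnorm, coe_nnnorm, coeff_morsePoly_succ, norm_div, norm_mul]
  have hkm : ‖(k + 1 : ℝ)‖ ≤ ‖(m + 1 : ℝ)‖ := by
    rw [Real.norm_of_nonneg (by positivity), Real.norm_of_nonneg (by positivity)]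
    exact_mod_cast Nat.succ_le_succ hk.le
  rw [le_div_iff₀ (norm_pos_iff.2 (by positivity)), mul_comm]
  gcongr

/-- The coefficients of the monic polynomial with critical points `y ∘ Sum.inl`, together with the
boundary points `y ∘ Sum.inr`. -/
noncomputable def morseCoeffs (y : Fin m ⊕ Fin l → ℝ) : (Fin m → ℝ) × (Fin l → ℝ) :=
  (fun k => (morsePoly (y ∘ Sum.inl)).coeff (k + 1), y ∘ Sum.inr)

theorem continuous_morseCoeffs : Continuous (morseCoeffs (m := m) (l := l)) := by
  refine Continuous.prodMk (continuous_pi fun k => ?_) (by fun_prop)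
  exact (continuous_coeff_morsePoly (k + 1)).comp (by fun_prop)

theorem isClosedMap_morseCoeffs : IsClosedMap (morseCoeffs (m := m) (l := l)) := by
  refine (isProperMap_iff_tendsto_cocompact.2 ⟨continuous_morseCoeffs, ?_⟩).isClosedMap
  refine Filter.tendsto_cocompact_cocompact_of_norm fun ε => ⟨ε + 1, fun y hy => ?_⟩
  refine lt_of_add_lt_add_right (hy.trans_le ?_)
  refine (pi_norm_le_iff_of_nonneg (by positivity)).2 (Sum.forall.2 ⟨fun j => ?_, fun i => ?_⟩)
  · exact (norm_le_pi_norm (y ∘ Sum.inl) j).trans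
      ((norm_le_norm_coeff_morsePoly_add_one _).trans
        (add_le_add_left (norm_fst_le (morseCoeffs y)) 1))
  · exact (norm_le_pi_norm (y ∘ Sum.inr) i).trans
      ((norm_snd_le (morseCoeffs y)).trans (le_add_of_nonneg_right zero_le_one))

theorem realizes_iff_morseCoeffs_eq (hm : 0 < m) :
    Realizes y q ↔
      morseCoeffs y = (fun k : Fin m => (unfolding (m + 1) q.1).coeff (k + 1), q.2) := by
  rw [Realizes, eq_unfolding_iff (by omega) (monic_morsePoly _) (natDegree_morsePoly _)
    (coeff_morsePoly_zero _), morseCoeffs, Prod.mk.injEq, funext_iff (f := fun k : Fin m => _),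
    Fin.forall_iff, Nat.add_sub_cancel]

theorem isClosed_setOf_exists_realizes (hm : 0 < m) {A : Set (Fin m ⊕ Fin l → ℝ)}
    (hA : IsClosed A) : IsClosed {q | ∃ y ∈ A, Realizes y q} := by
  simp only [realizes_iff_morseCoeffs_eq hm]
  refine (isClosedMap_morseCoeffs A hA).preimage
    (Continuous.prodMk (continuous_pi fun k => ?_) continuous_snd)
  exact (continuous_coeff_unfolding _).comp continuous_fst

end Realization

section Stratum

variable {m l : ℕ}

/-- The multiboundary polynomials of combinatorial type `τ`. -/
def stratum (τ : MorsificationType m l) : Set ((Fin (m + 1 - 2) → ℝ) × (Fin l → ℝ)) :=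
  {q | ∃ y ∈ orderCone (IsLeftOf τ.branch), markedValues y ∈ orderCone τ.lt ∧ Realizes y q}

variable {β : Fin l → Fin (m + 1)} {y : Fin m ⊕ Fin l → ℝ} {τ : MorsificationType m l}

theorem isLeftOf_inl_inl {i j : Fin m} : IsLeftOf β (.inl i) (.inl j) ↔ j < i := by
  simp [IsLeftOf, slot]

theorem antitone_of_mem_closedOrderCone (hy : y ∈ closedOrderCone (IsLeftOf β)) :
    Antitone (y ∘ Sum.inl) :=
  antitone_iff_forall_lt.2 fun _ _ hij => hy _ _ (isLeftOf_inl_inl.2 hij)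

theorem strictAnti_of_mem_orderCone (hy : y ∈ orderCone (IsLeftOf β)) :
    StrictAnti (y ∘ Sum.inl) :=
  fun _ _ hij => hy _ _ (isLeftOf_inl_inl.2 hij)

theorem isLeftOf_inr_inl {i : Fin l} {j : Fin m} :
    IsLeftOf β (.inr i) (.inl j) ↔ j.castSucc < β i := by
  simp only [IsLeftOf, slot, Fin.lt_def, Fin.val_castSucc]
  omega

theorem isLeftOf_inl_inr {i : Fin l} {j : Fin m} :
    IsLeftOf β (.inl j) (.inr i) ↔ β i ≤ j.castSucc := by
  simp only [IsLeftOf, slot, Fin.le_def, Fin.val_castSucc]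
  omega

theorem lt_inl_iff_of_mem_orderCone (hy : y ∈ orderCone (IsLeftOf β)) {i : Fin l} {j : Fin m} :
    y (.inr i) < y (.inl j) ↔ j.castSucc < β i := by
  refine ⟨fun h => ?_, fun h => hy _ _ (isLeftOf_inr_inl.2 h)⟩
  by_contra hle
  exact lt_asymm h (hy _ _ (isLeftOf_inl_inr.2 (not_lt.1 hle)))

theorem le_of_forall_castSucc_lt {k k' : Fin (m + 1)}
    (h : ∀ j : Fin m, j.castSucc < k → j.castSucc < k') : k ≤ k' := by
  by_contra! hlt
  obtain ⟨j, rfl⟩ := Fin.exists_castSucc_eq.2 (hlt.trans_le k.le_last).ne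
  exact lt_irrefl _ (h j hlt)

theorem branch_eq_of_mem_orderCone {β' : Fin l → Fin (m + 1)}
    (hy : y ∈ orderCone (IsLeftOf β)) (hy' : y ∈ orderCone (IsLeftOf β')) : β = β' := by
  funext i
  have h (j : Fin m) : j.castSucc < β i ↔ j.castSucc < β' i :=
    (lt_inl_iff_of_mem_orderCone hy).symm.trans (lt_inl_iff_of_mem_orderCone hy')
  exact le_antisymm (le_of_forall_castSucc_lt fun j => (h j).1)
    (le_of_forall_castSucc_lt fun j => (h j).2)

theorem exists_branch_index {x : Fin m → ℝ} (hx : Antitone x) (t : ℝ) :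
    ∃ k : Fin (m + 1), ∀ j : Fin m, t < x j ↔ j.castSucc < k := by
  classical
  have hex : ∃ k, ∀ j : Fin m, k ≤ (j : ℕ) → x j ≤ t := ⟨m, fun j hj => (j.2.not_ge hj).elim⟩
  refine ⟨⟨Nat.find hex, Nat.lt_succ_of_le (Nat.find_min' hex fun j hj => (j.2.not_ge hj).elim)⟩,
    fun j => ⟨fun h => ?_, fun h => ?_⟩⟩
  · exact lt_of_not_ge fun hj => h.not_ge (Nat.find_spec hex j hj)
  · have hmin := Nat.find_min hex h
    push Not at hmin
    obtain ⟨i, hji, hi⟩ := hmin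
    exact hi.trans_le (hx hji)

theorem exists_mem_orderCone (hy : StrictAnti (y ∘ Sum.inl))
    (hne : ∀ i j, y (.inr i) ≠ y (.inl j)) : ∃ β, y ∈ orderCone (IsLeftOf β) := by
  choose β hβ using fun i => exists_branch_index hy.antitone (y (.inr i))
  have hlt {i : Fin l} {j : Fin m} (h : IsLeftOf β (.inr i) (.inl j)) : y (.inr i) < y (.inl j) :=
    (hβ i j).2 (isLeftOf_inr_inl.1 h)
  have hgt {i : Fin l} {j : Fin m} (h : IsLeftOf β (.inl j) (.inr i)) : y (.inl j) < y (.inr i) :=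
    (hne i j).lt_or_gt.resolve_left fun hij =>
      (isLeftOf_inl_inr.1 h).not_gt ((hβ i j).1 hij)
  refine ⟨β, fun a b hab => ?_⟩
  rcases a with i | s <;> rcases b with j | t
  · exact hy (isLeftOf_inl_inl.1 hab)
  · exact hgt hab
  · exact hlt hab
  · have hts : β t < β s := by simpa [IsLeftOf, slot] using hab
    let j : Fin m := (β t).castLT (hts.trans_le (β s).le_last)
    exact (hlt (j := j) (isLeftOf_inr_inl.2 hts)).trans (hgt (isLeftOf_inl_inr.2 le_rfl))

end Stratum

section Strata

variable {m l : ℕ}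

theorem orderCone_isLeftOf_nonempty (β : Fin l → Fin (m + 1)) :
    (orderCone (IsLeftOf β)).Nonempty :=
  ⟨fun a => -(slot β a : ℝ), fun _ _ hab => neg_lt_neg (Nat.cast_lt.2 hab)⟩

theorem isHomeomorph_valueMap_restrict (hm : 0 < m) (β : Fin l → Fin (m + 1)) :
    IsHomeomorph ((mapsTo_valueMap (β := β)).restrict valueMap
      (orderCone (IsLeftOf β) ×ˢ Set.univ) (orderCone (Forced β) ×ˢ Set.univ)) :=
  isHomeomorph_mapsTo_restrict ((isOpen_orderCone _).prod isOpen_univ)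
    ((isOpen_orderCone _).prod isOpen_univ) ((convex_orderCone _).prod convex_univ)
    ((convex_orderCone _).prod convex_univ) ((orderCone_isLeftOf_nonempty β).prod Set.univ_nonempty)
    contDiff_valueMap (fun _ hz => injective_fderiv_valueMap_of_mem hm hz.1) mapsTo_valueMap
    fun _ hKW hK => isCompact_inter_preimage_valueMap hm hK hKW

theorem isConnected_stratum (hm : 0 < m) (τ : MorsificationType m l) :
    IsConnected (stratum τ) := by
  set Z := orderCone (IsLeftOf τ.branch) ×ˢ Set.univ ∩ valueMap ⁻¹' (orderCone τ.lt ×ˢ {(0 : ℝ)})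
  have hZ : IsConnected Z := by
    refine isConnected_inter_preimage_of_isHomeomorph (isHomeomorph_valueMap_restrict hm τ.branch)
      (Set.prod_mono (fun v hv a b hab => hv a b (τ.lt_of_forced a b hab)) (Set.subset_univ _)) ?_
    exact ((convex_orderCone _).prod (convex_singleton 0)).isConnected
      ((orderCone_nonempty τ.lt).prod (Set.singleton_nonempty 0))
  let Φ (z : (Fin m ⊕ Fin l → ℝ) × ℝ) : (Fin (m + 1 - 2) → ℝ) × (Fin l → ℝ) :=
    (fun j => (morsePoly (z.1 ∘ Sum.inl)).coeff (m + 1 - 2 - j), z.1 ∘ Sum.inr)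
  have hΦ : Continuous Φ :=
    Continuous.prodMk (continuous_pi fun j => (continuous_coeff_morsePoly _).comp (by fun_prop))
      (by fun_prop)
  suffices heq : stratum τ = Φ '' Z by
    rw [heq]
    exact hZ.image Φ hΦ.continuousOn
  ext q
  constructor
  · rintro ⟨y, hy, hv, hyq⟩
    have hcoeff := coeff_unfolding_pred (n := m + 1) (by omega) q.1
    rw [← hyq.1, Nat.add_sub_cancel, coeff_morsePoly_self hm, neg_eq_zero, mul_eq_zero] at hcoeff
    have hsum : ∑ j, y (.inl j) = 0 := hcoeff.resolve_left (by positivity)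
    refine ⟨(y, 0), ⟨⟨hy, trivial⟩, ?_, hsum⟩, Prod.ext (funext fun j => ?_) hyq.2⟩
    · simpa only [valueMap, zero_add] using hv
    · exact (congrArg (coeff · _) hyq.1).trans (coeff_unfolding_sub q.1 j)
  · rintro ⟨z, ⟨⟨hz, -⟩, hv, hsum⟩, rfl⟩
    refine ⟨z.1, hz, fun a b hab => (add_lt_add_iff_left z.2).1 (hv a b hab), ?_, rfl⟩
    refine eq_unfolding (by omega) (monic_morsePoly _) (natDegree_morsePoly _)
      (coeff_morsePoly_zero _) ?_
    rw [Nat.add_sub_cancel, coeff_morsePoly_self hm, neg_eq_zero]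
    exact mul_eq_zero_of_right _ hsum

theorem exists_mem_stratum (hm : 0 < m) {q : (Fin (m + 1 - 2) → ℝ) × (Fin l → ℝ)}
    (hq : q ∈ V (m + 1) l) : ∃ τ : MorsificationType m l, q ∈ stratum τ := by
  obtain ⟨y, hy, hyq⟩ := exists_realizes_of_mem_V hm hq
  have hinj : Function.Injective (markedValues y) := (hyq.mem_V_iff hy).1 hq
  obtain ⟨β, hβ⟩ := exists_mem_orderCone hy fun i j h =>
    Sum.inr_ne_inl (hinj (congrArg (eval · (morsePoly (y ∘ Sum.inl))) h))
  have hlt : IsStrictTotalOrder (Fin m ⊕ Fin l) (InvImage (· < ·) (markedValues y)) :=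
    (RelEmbedding.preimage ⟨_, hinj⟩ (· < ·)).isStrictTotalOrder
  have hforced : (valueMap (y, 0)).1 ∈ orderCone (Forced β) :=
    (mapsTo_valueMap (x := (y, 0)) ⟨hβ, trivial⟩).1
  refine ⟨⟨β, InvImage (· < ·) (markedValues y), hlt, fun a b hab => ?_⟩,
    y, hβ, fun _ _ hab => hab, hyq⟩
  simpa [valueMap, InvImage] using hforced a b hab

theorem stratum_eq_V_inter (hm : 0 < m) (τ : MorsificationType m l) : stratum τ = V (m + 1) l ∩
    {q | ∃ y ∈ closedOrderCone (IsLeftOf τ.branch) ∩ markedValues ⁻¹' closedOrderCone τ.lt,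
      Realizes y q} := by
  ext q
  constructor
  · rintro ⟨y, hy, hv, hyq⟩
    exact ⟨(hyq.mem_V_iff (strictAnti_of_mem_orderCone hy)).2 (injective_of_mem_orderCone hv), y,
      ⟨orderCone_subset_closedOrderCone _ hy, orderCone_subset_closedOrderCone _ hv⟩, hyq⟩
  · rintro ⟨hq, y, ⟨hy, hv⟩, hyq⟩
    obtain ⟨y', hy', hyq'⟩ := exists_realizes_of_mem_V hm hq
    obtain rfl := hyq.eq_of_antitone hyq' (antitone_of_mem_closedOrderCone hy) hy'.antitone
    have hinj : Function.Injective (markedValues y) := (hyq.mem_V_iff hy').1 hq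
    have hv' : markedValues y ∈ orderCone τ.lt := fun a b hab =>
      (hv a b hab).lt_of_ne (hinj.ne (ne_of_irrefl hab))
    refine ⟨y, ?_, hv', hyq⟩
    refine mem_orderCone_of_valueMap_mem (z := (y, 0)) hy fun a b hab => ?_
    simpa [valueMap] using hv' a b (τ.lt_of_forced a b hab)

theorem eq_of_mem_stratum {τ τ' : MorsificationType m l}
    {q : (Fin (m + 1 - 2) → ℝ) × (Fin l → ℝ)} (hq : q ∈ stratum τ) (hq' : q ∈ stratum τ') :
    τ = τ' := by
  obtain ⟨y, hy, hv, hyq⟩ := hq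
  obtain ⟨y', hy', hv', hyq'⟩ := hq'
  obtain rfl := hyq.eq_of_antitone hyq' (strictAnti_of_mem_orderCone hy).antitone
    (strictAnti_of_mem_orderCone hy').antitone
  refine MorsificationType.ext (branch_eq_of_mem_orderCone hy hy') ?_
  funext a b
  rw [← lt_iff_of_mem_orderCone hv, ← lt_iff_of_mem_orderCone hv']

theorem card_connectedComponents_V :
    Nat.card (ConnectedComponents (V (m + 2) l)) = Nat.card (MorsificationType (m + 1) l) := by
  have hm : 0 < m + 1 := m.succ_pos
  refine card_connectedComponents_eq_of_partition (s := fun τ => Subtype.val ⁻¹' stratum τ)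
    (fun τ => ?_) (fun τ => ?_) (fun τ τ' hne => ?_) fun q => exists_mem_stratum hm q.2
  · have hcont : Continuous (markedValues (m := m + 1) (l := l)) :=
      continuous_pi fun a => (contDiff_markedValues a).continuous
    rw [stratum_eq_V_inter hm, Subtype.preimage_coe_self_inter]
    exact (isClosed_setOf_exists_realizes hm ((isClosed_closedOrderCone _).inter
      ((isClosed_closedOrderCone _).preimage hcont))).preimage continuous_subtype_val
  · have hsub : stratum τ ⊆ V (m + 2) l := by
      rw [stratum_eq_V_inter hm]
      exact Set.inter_subset_left
    have hconn := isConnected_stratum hm τ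
    rw [← Set.inter_eq_right.2 hsub, ← Subtype.image_preimage_coe] at hconn
    exact ⟨Set.image_nonempty.1 hconn.nonempty,
      Topology.IsInducing.subtypeVal.isPreconnected_image.1 hconn.isPreconnected⟩
  · exact Set.disjoint_left.2 fun q hq hq' => hne (eq_of_mem_stratum hq hq')

end Strata

/-- The recurrence `#comp(V(n−2, l+1)) = #comp(V(n, l)) − n·l·#comp(V(n, l−1))`
on the numbers of connected components of the spaces of very nice M-morsifications,
for `n ≥ 4`, `l ≥ 1`. -/
theorem morsification_component_recurrence (n l : ℕ) (hn : 4 ≤ n) (hl : 1 ≤ l) :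
    (Nat.card (ConnectedComponents ↥(V (n - 2) (l + 1))) : ℤ) =
      (Nat.card (ConnectedComponents ↥(V n l)) : ℤ) -
        (n : ℤ) * (l : ℤ) * (Nat.card (ConnectedComponents ↥(V n (l - 1))) : ℤ) := by
  obtain ⟨m, rfl⟩ : ∃ m, n = m + 4 := ⟨n - 4, by omega⟩
  obtain ⟨k, rfl⟩ : ∃ k, l = k + 1 := ⟨l - 1, by omega⟩
  change (Nat.card (ConnectedComponents (V (m + 2) (k + 2))) : ℤ) = _
  rw [Nat.add_sub_cancel (n := k), card_connectedComponents_V, card_connectedComponents_V,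
    card_connectedComponents_V, MorsificationType.card_recurrence]
  push_cast
  ring
end

section
/- Let g : ℝ → ℝ be defined on (−π/2, π/2) by g(t) = 3t²/(1 − sin t) − 3t·cos t·(3 − sin t)/(1 − sin t)² + 3(2 − sin t)/(1 − sin t)². Then for every real t with |t| < π/2, the series ∑_{n=0}^∞ K n 4 · tⁿ/n! converges and its sum equals the fourth derivative g⁗(t) (iteratedDeriv 4 g t); that is, the exponential generating function for the multiboundary singularities B_n^4 is K_4(t) = ( 3t²/(1−sin t) − 3t cos t(3−sin t)/(1−sin t)² + 3(2−sin t)/(1−sin t)² )⁗. -/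
/-- The Bernoulli–Euler (zigzag, up-down) numbers: `A 0 = 1`, `A 1 = 1`, and
`2 * A (n+1) = ∑ k in range (n+1), (n.choose k) * A k * A (n-k)`. -/
def A : ℕ → ℕ
  | 0 => 1
  | 1 => 1
  | n + 2 =>
      (∑ k ∈ (Finset.range (n + 2)).attach,
        Nat.choose (n + 1) k.1 * A k.1 * A (n + 1 - k.1)) / 2
decreasing_by
  · have := Finset.mem_range.mp k.2; omega
  · have := Finset.mem_range.mp k.2; omega

/-- `K n l` : number of connected components of the space of very nice
M-morsifications of the multiboundary singularity `B_n^l`, extended by the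
recurrence `K n (l+1) = K (n+2) l − (n+2)·l·K (n+2) (l−1)` for `l ≥ 1`,
with `K n 0 = A (n-1)` for `n ≥ 1`, `K n 0 = 0` for `n ≤ 0`,
and `K n 1 = K (n+2) 0`. -/
def K : ℤ → ℕ → ℤ
  | n, 0 => if 1 ≤ n then (A (n - 1).toNat : ℤ) else 0
  | n, 1 => K (n + 2) 0
  | n, (l + 2) => K (n + 2) (l + 1) - (n + 2) * (l + 1) * K (n + 2) l

/-! The function `y = sec + tan = cos / (1 - sin)` satisfies the Riccati equation `2 y' = y² + 1`,
which is the recurrence of the zigzag numbers read off Taylor coefficients, so `y` is the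
exponential generating function of `A`. If `Fₗ` denotes that of `K · l`, the recurrence for `K`
reads `Fₗ₊₁ = (Fₗ - l t Fₗ₋₁')''` with `F₀' = y`. Unrolled to `l = 4` (`K_four` on coefficients),
this gives `F₄ = (y''' - 6 t y'' + 4 y' + 3 t² y' - 3 t y)''''`. The right-hand side is holomorphic
where `sin z ≠ 1`, in particular on the disc of radius `π / 2`, so its Taylor series converges
there. -/

open Filter Topology

section ExponentialGeneratingFunctions

variable {𝕜 : Type*} [NontriviallyNormedField 𝕜] {a b : ℕ → 𝕜} {f g : 𝕜 → 𝕜}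

/-- `f` is the exponential generating function of the sequence `a`: it is analytic at `0` with
Taylor expansion `∑ a n * zⁿ / n!`. The coefficients are recorded as derivatives at `0`, so that
no division by factorials is needed. -/
structure HasEGF (a : ℕ → 𝕜) (f : 𝕜 → 𝕜) : Prop where
  analyticAt : AnalyticAt 𝕜 f 0
  iteratedDeriv_eq : ∀ n, iteratedDeriv n f 0 = a n

namespace HasEGF

lemma congr (hf : HasEGF a f) (h : f =ᶠ[𝓝 0] g) : HasEGF a g :=
  ⟨hf.analyticAt.congr h, fun n => by rw [← h.iteratedDeriv_eq, hf.iteratedDeriv_eq]⟩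

lemma const (c : 𝕜) : HasEGF (fun n => if n = 0 then c else 0) (fun _ => c) :=
  ⟨analyticAt_const, fun _ => iteratedDeriv_const⟩

protected lemma id : HasEGF (fun n => if n = 1 then 1 else 0) (fun z : 𝕜 => z) :=
  ⟨analyticAt_id, fun _ => iteratedDeriv_fun_id_zero⟩

lemma const_mul (c : 𝕜) (hf : HasEGF a f) : HasEGF (fun n => c * a n) (fun z => c * f z) :=
  ⟨analyticAt_const.mul hf.analyticAt, fun n => by
    rw [iteratedDeriv_const_mul_field, hf.iteratedDeriv_eq]⟩

variable [CompleteSpace 𝕜]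

lemma add (hf : HasEGF a f) (hg : HasEGF b g) :
    HasEGF (fun n => a n + b n) (fun z => f z + g z) where
  analyticAt := hf.analyticAt.add hg.analyticAt
  iteratedDeriv_eq n := by
    rw [← hf.iteratedDeriv_eq, ← hg.iteratedDeriv_eq]
    exact iteratedDeriv_add hf.analyticAt.contDiffAt hg.analyticAt.contDiffAt

lemma mul (hf : HasEGF a f) (hg : HasEGF b g) :
    HasEGF (fun n => ∑ k ∈ Finset.range (n + 1), n.choose k * a k * b (n - k))
      (fun z => f z * g z) where
  analyticAt := hf.analyticAt.mul hg.analyticAt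
  iteratedDeriv_eq n := by
    simp only [← hf.iteratedDeriv_eq, ← hg.iteratedDeriv_eq]
    exact iteratedDeriv_mul hf.analyticAt.contDiffAt hg.analyticAt.contDiffAt

lemma id_mul (hf : HasEGF a f) : HasEGF (fun n => n * a (n - 1)) (fun z => z * f z) where
  analyticAt := (HasEGF.id.mul hf).analyticAt
  iteratedDeriv_eq n := by
    rw [(HasEGF.id.mul hf).iteratedDeriv_eq]
    rcases n with _ | n <;> simp

protected lemma deriv (hf : HasEGF a f) : HasEGF (fun n => a (n + 1)) (deriv f) :=
  ⟨hf.analyticAt.deriv, fun n => by rw [← iteratedDeriv_succ', hf.iteratedDeriv_eq]⟩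

lemma of_hasDerivAt (hf : HasEGF a f) (h : ∀ᶠ z in 𝓝 0, HasDerivAt f (g z) z) :
    HasEGF (fun n => a (n + 1)) g :=
  hf.deriv.congr (h.mono fun _ hz => hz.deriv)

protected lemma iteratedDeriv (hf : HasEGF a f) (k : ℕ) :
    HasEGF (fun n => a (n + k)) (iteratedDeriv k f) := by
  induction k with
  | zero => simpa only [iteratedDeriv_zero, add_zero] using hf
  | succ k ih => simpa only [iteratedDeriv_succ, add_right_comm, add_assoc] using ih.deriv

end HasEGF

lemma HasEGF.hasSum {a : ℕ → ℂ} {f : ℂ → ℂ} {r : ℝ} {z : ℂ} (hf : HasEGF a f)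
    (hd : DifferentiableOn ℂ f (Metric.ball 0 r)) (hz : z ∈ Metric.ball 0 r) :
    HasSum (fun n : ℕ => a n * z ^ n / n.factorial) (f z) := by
  refine (Complex.hasSum_taylorSeries_on_ball hd hz).congr_fun fun n => ?_
  rw [hf.iteratedDeriv_eq, sub_zero, smul_eq_mul, smul_eq_mul]
  ring

end ExponentialGeneratingFunctions

section RestrictionToReals

lemma ofReal_deriv_of_eventuallyEq {f : ℂ → ℂ} {g : ℝ → ℝ} {t : ℝ}
    (hf : DifferentiableAt ℂ f t) (hfg : ∀ᶠ u : ℝ in 𝓝 t, f u = g u) :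
    deriv f t = ↑(deriv g t) := by
  have hg : DifferentiableAt ℝ g t :=
    hf.hasDerivAt.real_of_complex.differentiableAt.congr_of_eventuallyEq
      (hfg.mono fun u hu => by simp [hu])
  exact (hf.hasDerivAt.comp_ofReal.congr_of_eventuallyEq
    (hfg.mono fun _ hu => hu.symm)).unique hg.hasDerivAt.ofReal_comp

lemma ofReal_iteratedDeriv_of_eventuallyEq {f : ℂ → ℂ} {g : ℝ → ℝ} {t : ℝ}
    (hf : AnalyticAt ℂ f t) (hfg : ∀ᶠ u : ℝ in 𝓝 t, f u = g u) (k : ℕ) :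
    iteratedDeriv k f t = ↑(iteratedDeriv k g t) := by
  induction k generalizing f g with
  | zero => simpa using hfg.self_of_nhds
  | succ k ih =>
    rw [iteratedDeriv_succ', iteratedDeriv_succ']
    refine ih hf.deriv ?_
    have hf_near : ∀ᶠ u : ℝ in 𝓝 t, AnalyticAt ℂ f u :=
      Complex.continuous_ofReal.continuousAt.eventually hf.eventually_analyticAt
    filter_upwards [hf_near, hfg.eventually_nhds] with u hfu hfgu
    exact ofReal_deriv_of_eventuallyEq hfu.differentiableAt hfgu

end RestrictionToReals

section Recurrences

/-- The terms `k` and `m - k` cancel modulo `2`; a middle term is even because the central binomial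
coefficient is. -/
lemma two_dvd_sum_choose_mul_mul (f : ℕ → ℕ) {m : ℕ} (hm : m ≠ 0) :
    2 ∣ ∑ k ∈ Finset.range (m + 1), m.choose k * f k * f (m - k) := by
  rw [← CharP.cast_eq_zero_iff (ZMod 2) 2]
  push_cast
  refine Finset.sum_involution (fun k _ => m - k) (fun k hk => ?_) (fun k _ hne hfix => hne ?_)
    (fun k _ => by grind) (fun k hk => Nat.sub_sub_self (Finset.mem_range_succ_iff.mp hk))
  · have hk' := Finset.mem_range_succ_iff.mp hk
    rw [Nat.choose_symm hk', Nat.sub_sub_self hk', mul_right_comm, CharTwo.add_self_eq_zero]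
  · obtain rfl : m = 2 * k := by omega
    have hcentral : 2 ∣ (2 * k).choose k := Nat.two_dvd_centralBinom_of_one_le (by omega)
    rw [(CharP.cast_eq_zero_iff (ZMod 2) 2 _).mpr hcentral, zero_mul, zero_mul]

lemma two_mul_A_succ (n : ℕ) :
    2 * A (n + 1) =
      ∑ k ∈ Finset.range (n + 1), n.choose k * A k * A (n - k) + if n = 0 then 1 else 0 := by
  rcases n with _ | n
  · simp [A]
  · rw [A, Finset.sum_attach (Finset.range (n + 2))
      (fun k => (n + 1).choose k * A k * A (n + 1 - k)),
      Nat.mul_div_cancel' (two_dvd_sum_choose_mul_mul A n.succ_ne_zero),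
      if_neg n.succ_ne_zero, add_zero]

lemma K_add_one_zero (m : ℕ) : K (m + 1) 0 = A m := by
  simp [K]

lemma K_four (n : ℕ) :
    K n 4 = A (n + 7) - (6 * n + 20) * A (n + 5) + 3 * (n + 2) * (n + 4) * A (n + 3) := by
  have h₇ : K (n + 2 + 2 + 2 + 2) 0 = A (n + 7) := by
    rw [← K_add_one_zero]; push_cast; ring_nf
  have h₅ : K (n + 2 + 2 + 2) 0 = A (n + 5) := by
    rw [← K_add_one_zero]; push_cast; ring_nf
  have h₃ : K (n + 2 + 2) 0 = A (n + 3) := by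
    rw [← K_add_one_zero]; push_cast; ring_nf
  simp only [K.eq_3, zero_add, K.eq_2, h₇, h₅, h₃]
  push_cast
  ring

lemma hasEGF_A_of_riccati {𝕜 : Type*} [NontriviallyNormedField 𝕜] [CompleteSpace 𝕜]
    [NeZero (2 : 𝕜)] {y : 𝕜 → 𝕜} (hy : AnalyticAt 𝕜 y 0) (hy₀ : y 0 = 1)
    (hriccati : ∀ᶠ z in 𝓝 0, 2 * deriv y z = y z * y z + 1) :
    HasEGF (fun n => (A n : 𝕜)) y := by
  have hEGF : HasEGF (fun n => iteratedDeriv n y 0) y := ⟨hy, fun _ => rfl⟩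
  have hrec (n : ℕ) : 2 * iteratedDeriv (n + 1) y 0 =
      ∑ k ∈ Finset.range (n + 1), n.choose k * iteratedDeriv k y 0 * iteratedDeriv (n - k) y 0 +
        if n = 0 then 1 else 0 :=
    (((hEGF.deriv.const_mul 2).congr hriccati).iteratedDeriv_eq n).symm.trans
      (((hEGF.mul hEGF).add (HasEGF.const 1)).iteratedDeriv_eq n)
  refine ⟨hy, fun n => ?_⟩
  induction n using Nat.strong_induction_on with
  | _ n ih =>
    rcases n with _ | n
    · simp [hy₀, A]
    · have hA := congrArg (Nat.cast : ℕ → 𝕜) (two_mul_A_succ n)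
      push_cast at hA
      refine mul_left_cancel₀ (NeZero.ne (2 : 𝕜)) ((hrec n).trans (hA.trans ?_).symm)
      congr 1
      refine Finset.sum_congr rfl fun k hk => ?_
      rw [ih k (by grind), ih (n - k) (by grind)]

end Recurrences

section SecAddTan

open Complex Metric

variable {z : ℂ}

/-- The function `sec + tan`, the exponential generating function of the zigzag numbers. The form
`cos / (1 - sin)` extends it holomorphically across the zeros of `cos` where `sin = -1`. -/
noncomputable def secAddTan (z : ℂ) : ℂ := cos z / (1 - sin z)

lemma one_sub_sin_ne_zero (hz : z ∈ ball (0 : ℂ) (Real.pi / 2)) : 1 - sin z ≠ 0 := by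
  intro h
  obtain ⟨k, rfl⟩ := sin_eq_one_iff.mp (sub_eq_zero.mp h).symm
  have habs : |Real.pi / 2 + k * (2 * Real.pi)| < Real.pi / 2 := by
    rw [← Real.norm_eq_abs, ← norm_real]
    simpa using hz
  obtain ⟨hlower, hupper⟩ := abs_lt.mp habs
  have hneg : (k : ℝ) < 0 := by nlinarith [Real.pi_pos]
  have hgt : (-1 : ℝ) < k := by nlinarith [Real.pi_pos]
  norm_cast at hneg hgt
  omega

lemma eventually_one_sub_sin_ne_zero : ∀ᶠ z in 𝓝 (0 : ℂ), 1 - sin z ≠ 0 :=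
  mem_of_superset (ball_mem_nhds 0 Real.pi_div_two_pos) fun _ => one_sub_sin_ne_zero

lemma hasDerivAt_secAddTan (h : 1 - sin z ≠ 0) : HasDerivAt secAddTan (1 / (1 - sin z)) z := by
  refine ((hasDerivAt_cos z).div ((hasDerivAt_sin z).const_sub 1) h).congr_deriv ?_
  field_simp
  linear_combination sin_sq_add_cos_sq z

lemma hasDerivAt_one_div_one_sub_sin (h : 1 - sin z ≠ 0) :
    HasDerivAt (fun z => 1 / (1 - sin z)) (cos z / (1 - sin z) ^ 2) z := by
  refine ((hasDerivAt_const z (1 : ℂ)).div ((hasDerivAt_sin z).const_sub 1) h).congr_deriv ?_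
  ring

lemma hasDerivAt_cos_div_one_sub_sin_sq (h : 1 - sin z ≠ 0) :
    HasDerivAt (fun z => cos z / (1 - sin z) ^ 2) ((2 + sin z) / (1 - sin z) ^ 2) z := by
  refine ((hasDerivAt_cos z).div (((hasDerivAt_sin z).const_sub 1).fun_pow 2)
    (pow_ne_zero 2 h)).congr_deriv ?_
  field_simp
  linear_combination (2 - 2 * sin z) * sin_sq_add_cos_sq z

lemma two_mul_deriv_secAddTan (h : 1 - sin z ≠ 0) :
    2 * deriv secAddTan z = secAddTan z * secAddTan z + 1 := by
  rw [(hasDerivAt_secAddTan h).deriv, secAddTan]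
  field_simp
  linear_combination -sin_sq_add_cos_sq z

lemma hasEGF_secAddTan : HasEGF (fun n => (A n : ℂ)) secAddTan := by
  have hanalytic : AnalyticAt ℂ secAddTan 0 := by
    unfold secAddTan
    fun_prop (disch := simp)
  exact hasEGF_A_of_riccati hanalytic (by simp [secAddTan])
    (eventually_one_sub_sin_ne_zero.mono fun _ => two_mul_deriv_secAddTan)

/-- The function whose fourth derivative is the exponential generating function of `K · 4`, as a
function of a complex variable. -/
noncomputable def fourthPrimitive (z : ℂ) : ℂ :=
  3 * z ^ 2 / (1 - sin z) - 3 * z * cos z * (3 - sin z) / (1 - sin z) ^ 2 +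
    3 * (2 - sin z) / (1 - sin z) ^ 2

lemma analyticAt_fourthPrimitive (h : 1 - sin z ≠ 0) : AnalyticAt ℂ fourthPrimitive z := by
  unfold fourthPrimitive
  fun_prop (disch := simpa)

lemma differentiableOn_iteratedDeriv_fourthPrimitive (k : ℕ) :
    DifferentiableOn ℂ (iteratedDeriv k fourthPrimitive) (ball 0 (Real.pi / 2)) := by
  intro z hz
  rw [iteratedDeriv_eq_iterate]
  exact ((analyticAt_fourthPrimitive (one_sub_sin_ne_zero hz)).iterated_deriv k).differentiableAt
    |>.differentiableWithinAt

lemma fourthPrimitive_eq (h : 1 - sin z ≠ 0) :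
    fourthPrimitive z =
      (2 + sin z) / (1 - sin z) ^ 2 + -6 * (z * (cos z / (1 - sin z) ^ 2)) +
        4 * (1 / (1 - sin z)) + 3 * (z * (z * (1 / (1 - sin z)))) + -3 * (z * secAddTan z) := by
  rw [fourthPrimitive, secAddTan]
  field_simp
  ring

lemma hasEGF_iteratedDeriv_fourthPrimitive :
    HasEGF (fun n => (K n 4 : ℂ)) (iteratedDeriv 4 fourthPrimitive) := by
  have h₀ := hasEGF_secAddTan
  have h₁ := h₀.of_hasDerivAt (eventually_one_sub_sin_ne_zero.mono fun _ => hasDerivAt_secAddTan)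
  have h₂ := h₁.of_hasDerivAt
    (eventually_one_sub_sin_ne_zero.mono fun _ => hasDerivAt_one_div_one_sub_sin)
  have h₃ := h₂.of_hasDerivAt
    (eventually_one_sub_sin_ne_zero.mono fun _ => hasDerivAt_cos_div_one_sub_sin_sq)
  have hsum := (((h₃.add (h₂.id_mul.const_mul (-6))).add (h₁.const_mul 4)).add
    (h₁.id_mul.id_mul.const_mul 3)).add (h₀.id_mul.const_mul (-3))
  convert (hsum.congr (eventually_one_sub_sin_ne_zero.mono fun _ h =>
    (fourthPrimitive_eq h).symm)).iteratedDeriv 4 using 2 with n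
  rw [K_four]
  simp only [show n + 4 - 1 = n + 3 by omega, show n + 3 - 1 = n + 2 by omega]
  push_cast
  ring

end SecAddTan

theorem egf_K_four_general (z : ℂ) (hz : ‖z‖ < Real.pi / 2) :
    HasSum (fun n : ℕ => (K n 4 : ℂ) * z ^ n / n.factorial)
      (iteratedDeriv 4 fourthPrimitive z) :=
  hasEGF_iteratedDeriv_fourthPrimitive.hasSum (differentiableOn_iteratedDeriv_fourthPrimitive 4)
    (mem_ball_zero_iff.mpr hz)

open Real in
/-- The exponential generating function for the multiboundary singularities `B_n^4`:
for `|t| < π/2`, `∑ K n 4 · tⁿ/n!` equals the fourth derivative of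
`g(t) = 3t²/(1−sin t) − 3t cos t(3−sin t)/(1−sin t)² + 3(2−sin t)/(1−sin t)²`. -/
theorem egf_K_four (t : ℝ) (ht : |t| < π / 2) :
    HasSum (fun n : ℕ => (K n 4 : ℝ) * t ^ n / n.factorial)
      (iteratedDeriv 4
        (fun u : ℝ =>
          3 * u ^ 2 / (1 - Real.sin u) -
            3 * u * Real.cos u * (3 - Real.sin u) / (1 - Real.sin u) ^ 2 +
            3 * (2 - Real.sin u) / (1 - Real.sin u) ^ 2) t) := by
  have hball : (t : ℂ) ∈ Metric.ball 0 (π / 2) := by simpa using ht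
  rw [← Complex.hasSum_ofReal, ← ofReal_iteratedDeriv_of_eventuallyEq
    (analyticAt_fourthPrimitive (one_sub_sin_ne_zero hball))
    (.of_forall fun u => by simp [fourthPrimitive])]
  simpa using egf_K_four_general t (by simpa using ht)
end

section
/- For every integer n ≤ −1, one has K n ((−n).toNat) = ((−n − 1).toNat)!; that is, K_n^{−n} = (−n−1)! (e.g. K_{−1}^1 = 1, K_{−2}^2 = 1, K_{−3}^3 = 2, K_{−4}^4 = 6, K_{−5}^5 = 24). -/
/-!
The polynomials `Sₙ` with `S₀ = 1 + X` and `Sₙ₊₁ = (1 - X²) Sₙ' + (n + 1) X Sₙ` encode every `K n l`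
with `n + l ≥ 1`. Since `p ↦ (1 - X²) p' + w X p` obeys a Leibniz rule in which the weights `w` add
up, the `Sₙ` satisfy the same quadratic convolution as the zigzag numbers (their exponential
generating function `F` solves `2 ∂F/∂t = F² + 1 - X²`), whence `Sₙ(0) = A n`. Comparing
coefficients, the recurrence of the `Sₙ` becomes that of `K`, so that `K n l = l! [Xˡ] S_N` with
`N = n + l - 1`. As `S₀` has degree `1`, `K` vanishes on the line `n + l = 1` for `l ≥ 2`, and on
the line `n + l = 0` the recurrence collapses to `K (-(l + 2)) (l + 2) = l (l + 1) K (-l) l`.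
-/

open Finset Polynomial

section WeightedDerivative

variable {R : Type*} [CommRing R]

/-- The first-order operator `p ↦ (1 - X²) p' + w X p` of weight `w`. Formally it is
`M ∘ (1 - X²) d/dX ∘ M⁻¹` with `M` the multiplication by `(1 - X²) ^ (w / 2)`, which is why weights
add under products. -/
noncomputable def weightedDerivative (w : R) : R[X] →ₗ[R] R[X] :=
  LinearMap.mulLeft R (1 - X ^ 2) ∘ₗ derivative + LinearMap.mulLeft R (C w * X)

theorem weightedDerivative_apply (w : R) (p : R[X]) :
    weightedDerivative w p = (1 - X ^ 2) * derivative p + C w * X * p :=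
  rfl

theorem weightedDerivative_add_mul (v w : R) (p q : R[X]) :
    weightedDerivative (v + w) (p * q) =
      weightedDerivative v p * q + p * weightedDerivative w q := by
  simp only [weightedDerivative_apply, derivative_mul, C_add]
  ring

theorem coeff_weightedDerivative_zero (w : R) (p : R[X]) :
    (weightedDerivative w p).coeff 0 = p.coeff 1 := by
  simp [weightedDerivative_apply, sub_mul, mul_assoc, coeff_derivative]

theorem coeff_weightedDerivative_succ (w : R) (p : R[X]) (l : ℕ) :
    (weightedDerivative w p).coeff (l + 1) =
      (l + 2) * p.coeff (l + 2) + (w - l) * p.coeff l := by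
  have expand : weightedDerivative w p =
      derivative p - derivative p * X * X + C w * (p * X) := by
    rw [weightedDerivative_apply]
    ring
  cases l <;>
    simp only [expand, coeff_add, coeff_sub, coeff_C_mul, coeff_mul_X, coeff_mul_X_zero,
      coeff_derivative] <;>
    push_cast <;> ring

end WeightedDerivative

/-- The polynomial whose value at `0` is the zigzag number `A N` (see `coeff_zero_zigzagPoly`) and
whose coefficients, multiplied by factorials, are the numbers `K n l` with `n + l = N + 1`
(see `K_eq_factorial_mul_coeff`). -/
noncomputable def zigzagPoly : ℕ → ℤ[X]
  | 0 => 1 + X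
  | N + 1 => weightedDerivative (N + 1 : ℤ) (zigzagPoly N)

theorem zigzagPoly_zero : zigzagPoly 0 = 1 + X :=
  rfl

theorem zigzagPoly_succ (N : ℕ) :
    zigzagPoly (N + 1) = weightedDerivative (N + 1 : ℤ) (zigzagPoly N) :=
  rfl

theorem zigzagPoly_one : zigzagPoly 1 = 1 + X := by
  simp only [zigzagPoly_succ, zigzagPoly_zero, weightedDerivative_apply, derivative_add,
    derivative_one, derivative_X, Nat.cast_zero, zero_add, C_1]
  ring

theorem weightedDerivative_zigzagPoly_mul (i j : ℕ) :
    weightedDerivative (i + j + 2 : ℤ) (zigzagPoly i * zigzagPoly j) =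
      zigzagPoly (i + 1) * zigzagPoly j + zigzagPoly i * zigzagPoly (j + 1) := by
  rw [zigzagPoly_succ, zigzagPoly_succ, ← weightedDerivative_add_mul]
  congr 2
  ring

theorem two_nsmul_zigzagPoly_add_two (n : ℕ) :
    2 • zigzagPoly (n + 2) =
      ∑ ij ∈ antidiagonal (n + 1),
        (n + 1).choose ij.1 • (zigzagPoly ij.1 * zigzagPoly ij.2) := by
  induction n with
  | zero =>
    have two : zigzagPoly 2 = zigzagPoly 0 * zigzagPoly 1 := by
      simp only [zigzagPoly_succ 1, zigzagPoly_one, zigzagPoly_zero, weightedDerivative_apply,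
        derivative_add, derivative_one, derivative_X, C_add, C_1, Nat.cast_one]
      ring
    simp [two, Nat.antidiagonal_succ, mul_comm (zigzagPoly 1), two_mul]
  | succ n ih =>
    have leibniz : ∀ ij ∈ antidiagonal (n + 1),
        weightedDerivative ((n + 2 : ℕ) + 1 : ℤ) (zigzagPoly ij.1 * zigzagPoly ij.2) =
          zigzagPoly (ij.1 + 1) * zigzagPoly ij.2 + zigzagPoly ij.1 * zigzagPoly (ij.2 + 1) := by
      intro ij hij
      rw [← weightedDerivative_zigzagPoly_mul]
      have := mem_antidiagonal.mp hij
      congr 2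
      omega
    rw [zigzagPoly_succ, ← map_nsmul, ih, map_sum,
      sum_antidiagonal_choose_succ_nsmul (fun i j => zigzagPoly i * zigzagPoly j),
      ← sum_add_distrib]
    refine sum_congr rfl fun ij hij => ?_
    rw [map_nsmul, leibniz ij hij, nsmul_add, add_comm,
      Nat.choose_symm_of_eq_add (mem_antidiagonal.mp hij).symm]

theorem A_add_two (n : ℕ) :
    A (n + 2) =
      (∑ ij ∈ antidiagonal (n + 1), (n + 1).choose ij.1 * A ij.1 * A ij.2) / 2 := by
  rw [A, sum_attach (range (n + 2)) fun k => (n + 1).choose k * A k * A (n + 1 - k),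
    Nat.sum_antidiagonal_eq_sum_range_succ_mk]

theorem coeff_zero_zigzagPoly (n : ℕ) : (zigzagPoly n).coeff 0 = A n := by
  induction n using Nat.strong_induction_on with
  | _ n ih =>
    match n with
    | 0 => simp [zigzagPoly_zero, A]
    | 1 => simp [zigzagPoly_one, A]
    | n + 2 =>
      have convolution : 2 * (zigzagPoly (n + 2)).coeff 0 =
          ∑ ij ∈ antidiagonal (n + 1), ((n + 1).choose ij.1 * A ij.1 * A ij.2 : ℤ) := by
        have h := congrArg (coeff · 0) (two_nsmul_zigzagPoly_add_two n)
        simp only [coeff_smul, finsetSum_coeff, mul_coeff_zero] at h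
        simp only [nsmul_eq_mul, Nat.cast_ofNat] at h
        refine h.trans (sum_congr rfl fun ij hij => ?_)
        have := mem_antidiagonal.mp hij
        rw [ih ij.1 (by omega), ih ij.2 (by omega), mul_assoc]
      rw [A_add_two]
      push_cast
      omega

theorem coeff_zero_zigzagPoly_succ (N : ℕ) :
    (zigzagPoly (N + 1)).coeff 0 = (zigzagPoly N).coeff 1 :=
  coeff_weightedDerivative_zero _ _

theorem coeff_succ_zigzagPoly_succ (N l : ℕ) :
    (zigzagPoly (N + 1)).coeff (l + 1) =
      (l + 2) * (zigzagPoly N).coeff (l + 2) + (N + 1 - l) * (zigzagPoly N).coeff l :=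
  coeff_weightedDerivative_succ _ _ _

theorem K_zero_eq_A {n : ℤ} {N : ℕ} (h : n = N + 1) : K n 0 = A N := by
  rw [K, if_pos (by omega), h, add_sub_cancel_right, Int.toNat_natCast]

theorem K_eq_factorial_mul_coeff {n : ℤ} {l N : ℕ} (h : n + l = N + 1) :
    K n l = l.factorial * (zigzagPoly N).coeff l := by
  induction l using Nat.strong_induction_on generalizing n N with
  | _ l ih =>
    match l with
    | 0 =>
      rw [K_zero_eq_A (N := N) (by simpa using h), coeff_zero_zigzagPoly, Nat.factorial_zero,
        Nat.cast_one, one_mul]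
    | 1 =>
      rw [K, K_zero_eq_A (N := N + 1) (by push_cast at h ⊢; omega), ← coeff_zero_zigzagPoly,
        coeff_zero_zigzagPoly_succ, Nat.factorial_one, Nat.cast_one, one_mul]
    | l + 2 =>
      push_cast at h
      rw [K, ih (l + 1) (by omega) (N := N + 1) (by push_cast; omega),
        ih l (by omega) (N := N) (by omega), coeff_succ_zigzagPoly_succ,
        show n + 2 = N + 1 - l by omega]
      push_cast [Nat.factorial_succ]
      ring

theorem K_eq_zero_of_add_eq_one {n : ℤ} {l : ℕ} (h : n + l = 1) (hl : 2 ≤ l) : K n l = 0 := by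
  have coeff_eq_zero : (zigzagPoly 0).coeff l = 0 := by
    rw [zigzagPoly_zero, coeff_add, coeff_one, coeff_X, if_neg (by omega), if_neg (by omega),
      add_zero]
  rw [K_eq_factorial_mul_coeff (N := 0) (by simpa using h), coeff_eq_zero, mul_zero]

theorem K_neg_add_two {l : ℕ} (hl : 1 ≤ l) :
    K (-(l + 2)) (l + 2) = l * (l + 1) * K (-l) l := by
  have K_eq_zero : K (-l) (l + 1) = 0 :=
    K_eq_zero_of_add_eq_one (by push_cast; ring) (by omega)
  rw [K, show -((l : ℤ) + 2) + 2 = -l by ring, K_eq_zero]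
  ring

theorem K_neg_succ (m : ℕ) : K (-(m + 1 : ℕ)) (m + 1) = m.factorial := by
  induction m using Nat.twoStepInduction with
  | zero => simp [K, A]
  | one => simp [K, A]
  | more m ih _ =>
    have recurrence := K_neg_add_two (Nat.le_add_left 1 m)
    rw [ih] at recurrence
    push_cast [Nat.factorial_succ] at recurrence ⊢
    rw [show -((m : ℤ) + 2 + 1) = -(m + 1 + 2) by ring, recurrence]
    ring

/-- For `n ≤ −1`, `K n (−n) = (−n−1)!`. -/
theorem K_neg_diag (n : ℤ) (hn : n ≤ -1) :
    K n (-n).toNat = (((-n - 1).toNat).factorial : ℤ) := by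
  obtain ⟨m, rfl⟩ : ∃ m : ℕ, n = -(m + 1 : ℕ) := ⟨(-n - 1).toNat, by omega⟩
  rw [neg_neg, Int.toNat_natCast, Nat.cast_succ, add_sub_cancel_right, Int.toNat_natCast]
  exact K_neg_succ m
end
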